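/- Fix s ∈ (1/2, 1), a cutoff η as in the definition of I_N, and a smooth function ψ : ℝ³ → [0,1] supported in the annulus {ξ : 1/2 ≤ |ξ| ≤ 2}; for M ≥ 1 let P_M be the Fourier multiplier operator 𝓕(P_M g)(ξ) = ψ(ξ/M) 𝓕g(ξ). Then there is a constant C > 0 (depending only on s, η, ψ) such that for every T > 0, every N ≥ 1, every M ≥ 1, and every smooth decaying solution φ of the cubic defocusing NLS on [0,T] × ℝ³, ‖P_M ( I_N(φ³) )‖_{L^{10/3}_{x,t}([0,T]×ℝ³)} ≤ C M Z³, where Z = sup over Schrödinger admissible pairs (q,r) of ‖∇ I_N φ‖_{L^q_t L^r_x([0,T]×ℝ³)}. -/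

import Mathlib

open MeasureTheory Real Complex Filter
open scoped FourierTransform ContDiff ENNReal

noncomputable section

abbrev E3 := EuclideanSpace ℝ (Fin 3)

/-- the `i`-th standard basis vector of `ℝ³`. -/
def e3 (i : Fin 3) : E3 := EuclideanSpace.single i (1 : ℝ)

/-- the `i`-th spatial partial derivative. -/
def pd (g : E3 → ℂ) (i : Fin 3) (x : E3) : ℂ := fderiv ℝ g x (e3 i)

/-- the (spatial) Laplacian. -/
def lap (g : E3 → ℂ) (x : E3) : ℂ := ∑ i : Fin 3, fderiv ℝ (fun y => pd g i y) x (e3 i)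

/-- the antiderivative `F(z) = ∫₀^z f(s) ds` of `f`. -/
def Fa (f : ℝ → ℝ) (z : ℝ) : ℝ := ∫ s in (0:ℝ)..z, f s

/-- `u` is a smooth decaying solution of the gNLS `i ∂ₜ u + α Δ u = μ f(|u|²) u`
on `[0,T] × ℝ³`: it is jointly smooth, every time derivative slice is a Schwartz
function of `x`, and the equation holds pointwise on `[0,T] × ℝ³`. -/
structure IsSolution (α μ : ℝ) (f : ℝ → ℝ) (T : ℝ) (u : ℝ → E3 → ℂ) : Prop where
  smooth : ContDiff ℝ ∞ (fun p : ℝ × E3 => u p.1 p.2)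
  schwartz : ∀ (k : ℕ) (t : ℝ), ∃ g : SchwartzMap E3 ℂ,
      ∀ x, iteratedDeriv k (fun s => u s x) t = g x
  eqn : ∀ t ∈ Set.Icc (0:ℝ) T, ∀ x : E3,
      Complex.I * deriv (fun s => u s x) t + (α : ℂ) * lap (u t) x
        = ((μ * f (Complex.normSq (u t x)) : ℝ) : ℂ) * u t x

/-- the `i`-th component of the mass current `Im (conj u ∇u)`. -/
def massCur (g : E3 → ℂ) (i : Fin 3) (x : E3) : ℝ := ((starRingEnd ℂ) (g x) * pd g i x).im

/-- the Morawetz action centered at `y`. -/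
def morAction (g : E3 → ℂ) (y : E3) : ℝ :=
  ∫ x : E3, ∑ i : Fin 3, massCur g i x * ((x i - y i) / ‖x - y‖)

/-- `|∇̸_y g(x)|²`, the squared norm of the angular part of the gradient. -/
def angGradSq (g : E3 → ℂ) (y x : E3) : ℝ :=
  ∑ i : Fin 3, Complex.normSq (pd g i x -
    (((x i - y i) / ‖x - y‖ : ℝ) : ℂ) *
      ∑ j : Fin 3, (((x j - y j) / ‖x - y‖ : ℝ) : ℂ) * pd g j x)

/-- squared homogeneous Sobolev norm `‖g‖²_{Ḣ^σ}`. -/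
def sobSq (σ : ℝ) (g : E3 → ℂ) : ℝ := ∫ ξ : E3, ‖ξ‖ ^ (2 * σ) * ‖𝓕 g ξ‖ ^ 2


/-- `η` is an admissible cutoff for the smoothing operator `I_N` at regularity `s`:
a smooth nonincreasing function on `[0,∞)` with values in `(0,1]`, equal to `1` for
`r ≤ 1` and to `r^{s−1}` for `r ≥ 2`. -/
def IsCutoff (s : ℝ) (η : ℝ → ℝ) : Prop :=
  ContDiff ℝ ∞ η ∧ AntitoneOn η (Set.Ici 0) ∧ (∀ r ≥ (0:ℝ), 0 < η r ∧ η r ≤ 1) ∧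
    (∀ r ≤ (1:ℝ), η r = 1) ∧ (∀ r ≥ (2:ℝ), η r = r ^ (s - 1))

/-- the smoothing operator `I_N`, a Fourier multiplier with symbol `η(|ξ|/N)`. -/
def Iop (η : ℝ → ℝ) (N : ℝ) (g : E3 → ℂ) : E3 → ℂ :=
  fun x => 𝓕⁻ (fun ξ : E3 => (η (‖ξ‖ / N) : ℂ) * 𝓕 g ξ) x

/-- the Littlewood–Paley type projection `P_M`, a Fourier multiplier with symbol `ψ(ξ/M)`. -/
def PM (ψ : E3 → ℝ) (M : ℝ) (g : E3 → ℂ) : E3 → ℂ :=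
  fun x => 𝓕⁻ (fun ξ : E3 => (ψ (M⁻¹ • ξ) : ℂ) * 𝓕 g ξ) x

/-- pointwise norm `|∇g(x)|` of the spatial gradient. -/
def gradNorm (g : E3 → ℂ) (x : E3) : ℝ := Real.sqrt (∑ i : Fin 3, Complex.normSq (pd g i x))

/-- `(q,r)` is a Schrödinger admissible pair for `ℝ^{3+1}`: `q, r ≥ 2` and
`1/q + 3/(2r) = 3/4`. -/
def SAdmissible (q r : ℝ≥0∞) : Prop := 2 ≤ q ∧ 2 ≤ r ∧ 1 / q + 3 / (2 * r) = 3 / 4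

/-- the mixed spacetime norm `‖G‖_{L^q_t L^r_x([0,T] × ℝ³)}` (of a scalar function). -/
def LqLr (q r : ℝ≥0∞) (T : ℝ) (G : ℝ → E3 → ℝ) : ℝ≥0∞ :=
  eLpNorm (fun t => (eLpNorm (G t) r volume).toReal) q (volume.restrict (Set.Icc (0:ℝ) T))

/-- `Z = sup_{(q,r) admissible} ‖∇ I_N φ‖_{L^q_t L^r_x([0,T] × ℝ³)}`. -/
def Znorm (η : ℝ → ℝ) (N T : ℝ) (φ : ℝ → E3 → ℂ) : ℝ≥0∞ :=
  ⨆ (q : ℝ≥0∞) (r : ℝ≥0∞) (_ : SAdmissible q r),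
    LqLr q r T (fun t x => gradNorm (Iop η N (φ t)) x)

/-- the modified energy `E(w) = ∫ (1/2)|∇w|² + (1/4)|w|⁴ dx`. -/
def energyE (w : E3 → ℂ) : ℝ :=
  ∫ x : E3, (1/2) * (∑ i : Fin 3, Complex.normSq (pd w i x)) + (1/4) * ‖w x‖ ^ 4

/-- squared inhomogeneous Sobolev norm `‖g‖²_{H^s}`. -/
def inhomSobSq (s : ℝ) (g : E3 → ℂ) : ℝ :=
  ∫ ξ : E3, (1 + ‖ξ‖ ^ 2) ^ s * ‖𝓕 g ξ‖ ^ 2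


/-! ### `L^p` norms of nonnegative functions -/

/-- the `L^p` norm of a nonnegative function on `ℝ³`. -/
def lnr (p : ℝ) (F : E3 → ℝ≥0∞) : ℝ≥0∞ := (∫⁻ x, F x ^ p) ^ (1 / p)

lemma eLpNorm_eq_lnr {ε : Type*} [ENorm ε] {p : ℝ} (hp : 0 < p) (f : E3 → ε) :
    eLpNorm f (ENNReal.ofReal p) volume = lnr p (fun x => ‖f x‖ₑ) := by
  rw [eLpNorm_eq_lintegral_rpow_enorm_toReal (by simpa using hp) ENNReal.ofReal_ne_top,
    ENNReal.toReal_ofReal hp.le, lnr]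

lemma lnr_mono {p : ℝ} (hp : 0 < p) {F G : E3 → ℝ≥0∞} (h : ∀ x, F x ≤ G x) :
    lnr p F ≤ lnr p G := by
  unfold lnr
  gcongr with x
  exact h x

lemma lnr_add_le {p : ℝ} (hp : 1 ≤ p) {F G : E3 → ℝ≥0∞} (hF : Measurable F) (hG : Measurable G) :
    lnr p (fun x => F x + G x) ≤ lnr p F + lnr p G :=
  ENNReal.lintegral_Lp_add_le hF.aemeasurable hG.aemeasurable hp

lemma lnr_const_mul {p : ℝ} (hp : 0 < p) (c : ℝ≥0∞) {F : E3 → ℝ≥0∞} (hF : Measurable F) :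
    lnr p (fun x => c * F x) = c * lnr p F := by
  unfold lnr
  simp_rw [ENNReal.mul_rpow_of_nonneg _ _ hp.le]
  rw [lintegral_const_mul _ (hF.pow_const p), ENNReal.mul_rpow_of_nonneg _ _ (by positivity),
    ← ENNReal.rpow_mul, mul_one_div_cancel hp.ne', ENNReal.rpow_one]

lemma lnr_zero {p : ℝ} (hp : 0 < p) : lnr p (fun _ => 0) = 0 := by
  unfold lnr
  simp [hp]

lemma lnr_pow {p : ℝ} (hp : 0 < p) (F : E3 → ℝ≥0∞) :
    lnr p (fun x => F x ^ (3:ℕ)) = lnr (3 * p) F ^ (3:ℕ) := by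
  unfold lnr
  simp_rw [← ENNReal.rpow_natCast, ← ENNReal.rpow_mul]
  congr 1
  push_cast
  field_simp

lemma lnr_sum_le {ι : Type*} (s : Finset ι) {p : ℝ} (hp : 1 ≤ p) {F : ι → E3 → ℝ≥0∞}
    (hF : ∀ k, Measurable (F k)) :
    lnr p (fun x => ∑ k ∈ s, F k x) ≤ ∑ k ∈ s, lnr p (F k) := by
  classical
  induction s using Finset.induction_on with
  | empty => simp [lnr_zero (by linarith : 0 < p)]
  | insert a s ha ih =>
    simp only [Finset.sum_insert ha]
    refine (lnr_add_le hp (hF a) (Finset.measurable_fun_sum s fun i _ => hF i)).trans ?_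
    gcongr

lemma lnr_tsum_le {p : ℝ} (hp : 1 ≤ p) {F : ℕ → E3 → ℝ≥0∞}
    (hF : ∀ k, Measurable (F k)) :
    lnr p (fun x => ∑' k, F k x) ≤ ∑' k, lnr p (F k) := by
  have hp0 : 0 < p := by linarith
  have h1 : ∀ x, (∑' k, F k x) ^ p = ⨆ n, (∑ k ∈ Finset.range n, F k x) ^ p := by
    intro x
    rw [ENNReal.tsum_eq_iSup_nat]
    exact (ENNReal.orderIsoRpow p hp0).map_iSup _
  unfold lnr
  simp_rw [h1]
  rw [lintegral_iSup]
  · rw [show (⨆ n, ∫⁻ a, (∑ k ∈ Finset.range n, F k a) ^ p) ^ (1/p) =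
      ⨆ n, (∫⁻ a, (∑ k ∈ Finset.range n, F k a) ^ p) ^ (1/p) from
      (ENNReal.orderIsoRpow (1/p) (by positivity)).map_iSup _]
    refine iSup_le fun n => ?_
    exact (lnr_sum_le (Finset.range n) hp hF).trans (ENNReal.sum_le_tsum _)
  · intro n
    exact (Finset.measurable_fun_sum _ fun i _ => hF i).pow_const p
  · intro m n hmn x
    dsimp only
    gcongr

/-! ### The Young inequality -/

/-- convolution of nonnegative functions. -/
def cv (k G : E3 → ℝ≥0∞) (x : E3) : ℝ≥0∞ := ∫⁻ y, k y * G (x - y)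

lemma cv_measurable {k G : E3 → ℝ≥0∞} (hk : Measurable k) (hG : Measurable G) :
    Measurable (cv k G) := by
  unfold cv
  apply Measurable.lintegral_prod_right' (f := fun z : E3 × E3 => k z.2 * G (z.1 - z.2))
  fun_prop

lemma cv_mono {k G H : E3 → ℝ≥0∞} (h : ∀ x, G x ≤ H x) (x : E3) : cv k G x ≤ cv k H x := by
  unfold cv
  gcongr with y
  exact h _

lemma cv_add {k G H : E3 → ℝ≥0∞} (hk : Measurable k) (hG : Measurable G) (x : E3) :
    cv k (fun z => G z + H z) x = cv k G x + cv k H x := by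
  unfold cv
  simp_rw [mul_add]
  rw [lintegral_add_left]
  fun_prop

/-- **The Young convolution inequality**. -/
lemma young {p q r : ℝ} (hp : 1 ≤ p) (hq : 1 ≤ q) (hr : 1 ≤ r)
    (h : 1 / p + 1 / q = 1 + 1 / r) {k G : E3 → ℝ≥0∞} (hk : Measurable k) (hG : Measurable G) :
    lnr r (cv k G) ≤ lnr p k * lnr q G := by
  have hp0 : 0 < p := by linarith
  have hq0 : 0 < q := by linarith
  have hr0 : 0 < r := by linarith
  have hp1 : 1 / p ≤ 1 := by rw [div_le_one hp0]; exact hp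
  have hq1 : 1 / q ≤ 1 := by rw [div_le_one hq0]; exact hq
  set A : ℝ≥0∞ := ∫⁻ y, k y ^ p with hA
  set B : ℝ≥0∞ := ∫⁻ y, G y ^ q with hB
  have key : ∀ x, cv k G x ≤
      (∫⁻ y, k y ^ p * G (x - y) ^ q) ^ (1 / r) * A ^ (1 / p - 1 / r) * B ^ (1 / q - 1 / r) := by
    intro x
    have := ENNReal.lintegral_prod_norm_pow_le (μ := (volume : Measure E3)) (Finset.univ : Finset (Fin 3))
      (f := ![fun y => k y ^ p * G (x - y) ^ q, fun y => k y ^ p, fun y => G (x - y) ^ q])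
      (p := ![1 / r, 1 / p - 1 / r, 1 / q - 1 / r])
      (by
        intro i _
        fin_cases i
        · simp only [Fin.zero_eta, Matrix.cons_val_zero]; fun_prop
        · simp only [Fin.mk_one, Matrix.cons_val_one, Matrix.cons_val_zero]; fun_prop
        · simp only [Fin.reduceFinMk, Matrix.cons_val]; fun_prop)
      (by simp [Fin.sum_univ_three]; simp at h; linarith)
      (by
        intro i _
        fin_cases i
        · simp; positivity
        · simp at *; linarith
        · simp at *; linarith)
    simp only [Fin.prod_univ_three, Matrix.cons_val_zero, Matrix.cons_val_one, Matrix.cons_val] at this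
    rw [lintegral_sub_left_eq_self (fun y => G y ^ q) x] at this
    refine le_trans (le_of_eq ?_) this
    unfold cv
    congr 1
    ext y
    rw [ENNReal.mul_rpow_of_nonneg _ _ (by positivity), ← ENNReal.rpow_mul, ← ENNReal.rpow_mul,
      ← ENNReal.rpow_mul, ← ENNReal.rpow_mul]
    have e1 : k y = k y ^ (p * (1 / r)) * k y ^ (p * (1 / p - 1 / r)) := by
      rw [← ENNReal.rpow_add_of_nonneg _ _ (by positivity) (mul_nonneg hp0.le (by linarith)),
        show p * (1 / r) + p * (1 / p - 1 / r) = 1 by field_simp; ring, ENNReal.rpow_one]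
    have e2 : G (x - y) = G (x - y) ^ (q * (1 / r)) * G (x - y) ^ (q * (1 / q - 1 / r)) := by
      rw [← ENNReal.rpow_add_of_nonneg _ _ (by positivity) (mul_nonneg hq0.le (by linarith)),
        show q * (1 / r) + q * (1 / q - 1 / r) = 1 by field_simp; ring, ENNReal.rpow_one]
    conv_lhs => rw [e1, e2]
    ring
  have hprod : ∫⁻ x, ∫⁻ y, k y ^ p * G (x - y) ^ q = A * B := by
    rw [lintegral_lintegral_swap]
    · have : ∀ y, ∫⁻ x, k y ^ p * G (x - y) ^ q = k y ^ p * B := by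
        intro y
        rw [lintegral_const_mul _ (by fun_prop), lintegral_sub_right_eq_self (fun x => G x ^ q) y]
      simp_rw [this]
      rw [lintegral_mul_const _ (by fun_prop)]
    · fun_prop
  calc lnr r (cv k G) ≤ (∫⁻ x, ((∫⁻ y, k y ^ p * G (x - y) ^ q) ^ (1 / r) * A ^ (1 / p - 1 / r) * B ^ (1 / q - 1 / r)) ^ r) ^ (1 / r) := by
        unfold lnr
        gcongr with x
        exact key x
    _ = (∫⁻ x, (∫⁻ y, k y ^ p * G (x - y) ^ q) * ((A ^ (1 / p - 1 / r) * B ^ (1 / q - 1 / r)) ^ r)) ^ (1 / r) := by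
        congr 2
        ext x
        rw [mul_assoc, ENNReal.mul_rpow_of_nonneg _ _ hr0.le, ← ENNReal.rpow_mul,
          one_div_mul_cancel hr0.ne', ENNReal.rpow_one]
    _ = (A * B * (A ^ (1 / p - 1 / r) * B ^ (1 / q - 1 / r)) ^ r) ^ (1 / r) := by
        rw [lintegral_mul_const, hprod]
        apply Measurable.lintegral_prod_right' (f := fun z : E3 × E3 => k z.2 ^ p * G (z.1 - z.2) ^ q)
        fun_prop
    _ = lnr p k * lnr q G := by
        unfold lnr
        rw [← hA, ← hB, ENNReal.mul_rpow_of_nonneg _ _ (by positivity), ← ENNReal.rpow_mul (_ * _),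
          mul_one_div_cancel hr0.ne', ENNReal.rpow_one, ENNReal.mul_rpow_of_nonneg _ _ (by positivity)]
        have e1 : A ^ (1 / p) = A ^ (1 / r) * A ^ (1 / p - 1 / r) := by
          rw [← ENNReal.rpow_add_of_nonneg _ _ (by positivity) (by linarith)]
          congr 1; ring
        have e2 : B ^ (1 / q) = B ^ (1 / r) * B ^ (1 / q - 1 / r) := by
          rw [← ENNReal.rpow_add_of_nonneg _ _ (by positivity) (by linarith)]
          congr 1; ring
        rw [e1, e2]
        ring

/-! ### Fourier multipliers with dilated Schwartz symbols -/

/-- the Fourier multiplier operator with symbol `m`. -/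
def mD (m : E3 → ℂ) (f : E3 → ℂ) : E3 → ℂ := fun x => 𝓕⁻ (fun ξ : E3 => m ξ * 𝓕 f ξ) x

lemma mD_eq {m : E3 → ℂ} (hm : m.HasTemperateGrowth) (f : SchwartzMap E3 ℂ) :
    mD m f = SchwartzMap.fourierMultiplierCLM ℂ m f := by
  ext x
  rw [SchwartzMap.fourierMultiplierCLM_apply, SchwartzMap.fourierInv_coe]
  unfold mD
  refine congrFun (congrArg _ ?_) x
  funext ξ
  rw [SchwartzMap.smulLeftCLM_apply_apply hm, smul_eq_mul, SchwartzMap.fourier_coe]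

lemma mD_mD {m₁ m₂ : E3 → ℂ} (h₁ : m₁.HasTemperateGrowth) (h₂ : m₂.HasTemperateGrowth)
    (f : SchwartzMap E3 ℂ) : mD m₁ (mD m₂ f) = mD (fun ξ => m₁ ξ * m₂ ξ) f := by
  rw [mD_eq h₂, mD_eq h₁, SchwartzMap.fourierMultiplierCLM_fourierMultiplierCLM_apply h₁ h₂,
    ← mD_eq (h₁.mul h₂)]
  rfl

/-- the dilated symbol `m(ξ / L)`. -/
def dil (m : E3 → ℂ) (L : ℝ) : E3 → ℂ := fun ξ => m (L⁻¹ • ξ)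

lemma dil_temperate {m : E3 → ℂ} (hm : m.HasTemperateGrowth) (L : ℝ) :
    (dil m L).HasTemperateGrowth := by
  have h : (fun ξ : E3 => L⁻¹ • ξ).HasTemperateGrowth :=
    (L⁻¹ • ContinuousLinearMap.id ℝ E3).hasTemperateGrowth
  exact hm.comp h

/-- the modulus of the convolution kernel of the multiplier `m(ξ / L)`. -/
def kerm (m : SchwartzMap E3 ℂ) (L : ℝ) : E3 → ℝ≥0∞ :=
  fun y => ENNReal.ofReal (L ^ 3) * ‖(𝓕⁻ m) (L • y)‖ₑ

lemma ker_measurable (m : SchwartzMap E3 ℂ) (L : ℝ) : Measurable (kerm m L) := by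
  unfold kerm
  have := (𝓕⁻ m).continuous
  have h : Continuous fun y : E3 => (𝓕⁻ m) (L • y) := by fun_prop
  exact (h.measurable.enorm).const_mul _

lemma fourierInv_dil (m : SchwartzMap E3 ℂ) {L : ℝ} (hL : 0 < L) (x : E3) :
    𝓕⁻ (fun ξ : E3 => m (L⁻¹ • ξ)) x = ((L ^ 3 : ℝ) : ℂ) * (𝓕⁻ m) (L • x) := by
  rw [SchwartzMap.fourierInv_coe, Real.fourierInv_eq', Real.fourierInv_eq']
  have := Measure.integral_comp_inv_smul (volume : Measure E3)
    (fun v : E3 => Complex.exp (↑(2 * Real.pi * inner ℝ v (L • x)) * Complex.I) • m v) L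
  rw [show |L ^ Module.finrank ℝ E3| = L ^ 3 by
    rw [abs_of_nonneg (by positivity)]; simp] at this
  rw [← Complex.real_smul]
  refine Eq.trans ?_ this
  congr 1
  ext v
  congr 4
  rw [inner_smul_left, inner_smul_right]
  simp [hL.ne']

lemma mD_dil_le (m f : SchwartzMap E3 ℂ) {L : ℝ} (hL : 0 < L) (x : E3) :
    ‖mD (dil m L) f x‖ₑ ≤ cv (kerm m L) (fun y => ‖f y‖ₑ) x := by
  let e : E3 ≃L[ℝ] E3 := ContinuousLinearEquiv.smulLeft (Units.mk0 L⁻¹ (inv_ne_zero hL.ne'))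
  let mL : SchwartzMap E3 ℂ := SchwartzMap.compCLMOfContinuousLinearEquiv ℂ e m
  have hmL : ∀ ξ, mL ξ = m (L⁻¹ • ξ) := fun ξ => rfl
  have h1 : mD (dil m L) f x = SchwartzMap.convolution (ContinuousLinearMap.mul ℂ ℂ) (𝓕⁻ mL) f x := by
    have h2 : SchwartzMap.convolution (ContinuousLinearMap.mul ℂ ℂ) (𝓕⁻ mL) f =
        𝓕⁻ (SchwartzMap.pairing (ContinuousLinearMap.mul ℂ ℂ) mL (𝓕 f)) := by
      have h3 := SchwartzMap.fourier_convolution (ContinuousLinearMap.mul ℂ ℂ) (𝓕⁻ mL) f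
      rw [FourierTransform.fourier_fourierInv_eq] at h3
      rw [← h3, FourierTransform.fourierInv_fourier_eq]
    rw [h2, SchwartzMap.fourierInv_coe]
    unfold mD
    congr 1
  rw [h1, SchwartzMap.convolution_apply]
  unfold convolution cv
  refine (enorm_integral_le_lintegral_enorm _).trans ?_
  gcongr with y
  rw [ContinuousLinearMap.mul_apply', enorm_mul]
  gcongr
  rw [SchwartzMap.fourierInv_coe]
  rw [show ⇑mL = fun ξ => m (L⁻¹ • ξ) from rfl, fourierInv_dil m hL, enorm_mul]
  unfold kerm
  gcongr
  rw [← ofReal_norm, Complex.norm_real, Real.norm_of_nonneg (by positivity)]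

lemma lintegral_smul_eq {F : E3 → ℝ≥0∞} (hF : Measurable F) {L : ℝ} (hL : 0 < L) :
    ∫⁻ y, F (L • y) = ENNReal.ofReal ((L ^ 3)⁻¹) * ∫⁻ y, F y := by
  have h := Measure.map_addHaar_smul (volume : Measure E3) hL.ne'
  rw [← lintegral_map (g := fun y : E3 => L • y) hF (by fun_prop), h, lintegral_smul_measure]
  rw [abs_of_nonneg (by positivity)]
  simp

lemma lnr_ker (m : SchwartzMap E3 ℂ) {L p : ℝ} (hL : 0 < L) (hp : 0 < p) :
    lnr p (kerm m L) = ENNReal.ofReal (L ^ (3 * (1 - 1 / p))) * lnr p (fun y => ‖(𝓕⁻ m) y‖ₑ) := by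
  have hm : Measurable fun y => ‖(𝓕⁻ m) y‖ₑ := (𝓕⁻ m).continuous.measurable.enorm
  unfold kerm
  have hm' : Measurable fun y : E3 => ‖(𝓕⁻ m) (L • y)‖ₑ := hm.comp (measurable_const_smul L)
  rw [lnr_const_mul hp _ hm']
  unfold lnr
  dsimp only
  have hs := lintegral_smul_eq (hm.pow_const p) hL
  rw [hs,
    ENNReal.mul_rpow_of_nonneg _ _ (by positivity), ← mul_assoc]
  congr 1
  rw [ENNReal.ofReal_rpow_of_nonneg (by positivity) (by positivity), ← ENNReal.ofReal_mul (by positivity)]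
  congr 1
  rw [← Real.rpow_natCast, ← Real.rpow_neg hL.le, ← Real.rpow_mul hL.le, ← Real.rpow_add hL]
  congr 1
  push_cast
  ring

lemma lnr_schwartz_lt_top (m : SchwartzMap E3 ℂ) {p : ℝ} (hp : 0 < p) :
    lnr p (fun y => ‖m y‖ₑ) < (⊤ : ℝ≥0∞) := by
  rw [← eLpNorm_eq_lnr hp]
  exact (m.memLp (ENNReal.ofReal p) volume).2

/-- **The Bernstein inequality** for the kernels `kerm m L`. -/
lemma bernstein_ineq (m : SchwartzMap E3 ℂ) {q r : ℝ} (hq : 1 ≤ q) (hqr : q ≤ r) :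
    ∃ C > (0:ℝ), ∀ L > (0:ℝ), ∀ G : E3 → ℝ≥0∞, Measurable G →
      lnr r (cv (kerm m L) G) ≤ ENNReal.ofReal (C * L ^ (3 * (1 / q - 1 / r))) * lnr q G := by
  have hq0 : 0 < q := by linarith
  have hr0 : 0 < r := by linarith
  have h1 : 1 / r ≤ 1 / q := one_div_le_one_div_of_le hq0 hqr
  have h2 : 1 / q ≤ 1 := by rw [div_le_one hq0]; exact hq
  have h3 : 0 < 1 / r := by positivity
  set p : ℝ := 1 / (1 + 1 / r - 1 / q) with hp
  have hpp : 1 / p = 1 + 1 / r - 1 / q := by rw [hp, one_div_one_div]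
  have hp0 : 0 < p := by rw [hp]; apply one_div_pos.2; linarith
  have hp1 : 1 ≤ p := by rw [hp, le_div_iff₀ (by linarith)]; linarith
  have hfin := lnr_schwartz_lt_top (𝓕⁻ m) hp0
  refine ⟨(lnr p (fun y => ‖(𝓕⁻ m) y‖ₑ)).toReal + 1, by positivity, fun L hL G hG => ?_⟩
  refine (young hp1 hq (hq.trans hqr) (by rw [hpp]; ring) (ker_measurable m L) hG).trans ?_
  gcongr
  rw [lnr_ker m hL hp0, hpp, mul_comm _ (L ^ _), ENNReal.ofReal_mul (by positivity)]
  rw [show (1 : ℝ) - (1 + 1 / r - 1 / q) = 1 / q - 1 / r by ring]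
  gcongr
  refine (ENNReal.le_ofReal_iff_toReal_le hfin.ne (by positivity)).2 (by linarith)

/-! ### The symbol of `I_N` has temperate growth -/

lemma eta_sqrt_temperate {s : ℝ} (hs1 : s < 1) {η : ℝ → ℝ} (hη : IsCutoff s η) :
    (fun u : ℝ => η (√u)).HasTemperateGrowth := by
  obtain ⟨hsm, -, -, h1, h2⟩ := hη
  have hlow : ∀ u < (1:ℝ), (fun u : ℝ => η (√u)) =ᶠ[nhds u] fun _ => (1:ℝ) := by
    intro u hu
    filter_upwards [gt_mem_nhds hu] with v hv
    exact h1 _ (Real.sqrt_le_iff.2 ⟨by norm_num, by have : v < 1 := hv; linarith⟩)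
  have hhigh : ∀ u > (4:ℝ), (fun u : ℝ => η (√u)) =ᶠ[nhds u] fun v => v ^ ((s - 1) / 2) := by
    intro u hu
    filter_upwards [lt_mem_nhds hu] with v hv
    have hv' : (4:ℝ) < v := hv
    rw [h2 _ (Real.le_sqrt_of_sq_le (by norm_num; exact hv'.le)), Real.sqrt_eq_rpow,
      ← Real.rpow_mul (by linarith)]
    congr 1; ring
  have hcd : ContDiff ℝ ∞ (fun u : ℝ => η (√u)) := by
    rw [contDiff_iff_contDiffAt]
    intro u
    rcases lt_or_ge u 1 with hu | hu
    · exact contDiffAt_const.congr_of_eventuallyEq (hlow u hu)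
    · exact hsm.contDiffAt.comp u (Real.contDiffAt_sqrt (by linarith))
  refine ⟨hcd, fun n => ?_⟩
  have hcont : Continuous fun u => ‖iteratedFDeriv ℝ n (fun u : ℝ => η (√u)) u‖ :=
    (hcd.continuous_iteratedFDeriv (mod_cast le_top)).norm
  obtain ⟨B, hB⟩ := (isCompact_Icc (a := (1:ℝ)) (b := 4)).exists_bound_of_continuousOn
    hcont.continuousOn
  refine ⟨0, |B| + 1 + |Polynomial.eval ((s - 1) / 2) (descPochhammer ℝ n)|, fun u => ?_⟩
  simp only [pow_zero, mul_one]
  rcases lt_or_ge u 1 with hu | hu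
  · rw [((hlow u hu).iteratedFDeriv ℝ n).eq_of_nhds]
    rcases n with _ | n
    · simp; positivity
    · rw [iteratedFDeriv_succ_const]; simp; positivity
  · rcases le_or_gt u 4 with hu4 | hu4
    · have := hB u ⟨hu, hu4⟩
      rw [norm_norm] at this
      have h3 := le_abs_self B
      have h4 := abs_nonneg (Polynomial.eval ((s - 1) / 2) (descPochhammer ℝ n))
      linarith
    · rw [((hhigh u hu4).iteratedFDeriv ℝ n).eq_of_nhds, norm_iteratedFDeriv_eq_norm_iteratedDeriv,
        iteratedDeriv_eq_iterate, Real.iter_deriv_rpow_const, norm_mul, Real.norm_eq_abs]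
      have h5 : ‖u ^ ((s - 1) / 2 - (n:ℝ))‖ ≤ 1 := by
        rw [Real.norm_of_nonneg (by positivity)]
        apply Real.rpow_le_one_of_one_le_of_nonpos (by linarith)
        have : (0:ℝ) ≤ n := by positivity
        linarith
      have h4 := abs_nonneg (Polynomial.eval ((s - 1) / 2) (descPochhammer ℝ n))
      nlinarith [abs_nonneg B]

lemma eta_temperate {s : ℝ} (hs1 : s < 1) {η : ℝ → ℝ} (hη : IsCutoff s η) :
    (fun ξ : E3 => (η ‖ξ‖ : ℂ)).HasTemperateGrowth := by
  have h := (eta_sqrt_temperate hs1 hη).comp (Function.hasTemperateGrowth_norm_sq E3)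
  have h2 := Function.HasTemperateGrowth.comp Complex.ofRealCLM.hasTemperateGrowth h
  have e : (fun ξ : E3 => (η ‖ξ‖ : ℂ)) =
      (⇑Complex.ofRealCLM ∘ (fun u => η √u) ∘ fun x : E3 => ‖x‖ ^ 2) := by
    funext ξ
    simp
  rw [e]
  exact h2

lemma Iop_eq (η : ℝ → ℝ) {N : ℝ} (hN : 0 < N) (f : E3 → ℂ) :
    Iop η N f = mD (dil (fun ξ : E3 => (η ‖ξ‖ : ℂ)) N) f := by
  unfold Iop mD dil
  ext x
  refine congrFun (congrArg _ ?_) x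
  funext ξ
  dsimp only
  rw [norm_smul, norm_inv, Real.norm_of_nonneg hN.le, div_eq_inv_mul]

lemma PM_eq (ψ : E3 → ℝ) (M : ℝ) (f : E3 → ℂ) :
    PM ψ M f = mD (dil (fun ξ : E3 => (ψ ξ : ℂ)) M) f := rfl

/-! ### approximation by frequency truncation -/

lemma mD_dil_tendsto (χ : SchwartzMap E3 ℂ) (h0 : χ 0 = 1) (f : SchwartzMap E3 ℂ)
    {L : ℕ → ℝ} (hL : Tendsto L atTop atTop) (x : E3) :
    Tendsto (fun n => mD (dil χ (L n)) f x) atTop (nhds (f x)) := by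
  have hf : f x = 𝓕⁻ ((𝓕 f : SchwartzMap E3 ℂ) : E3 → ℂ) x := by
    have : f = 𝓕⁻ (𝓕 f : SchwartzMap E3 ℂ) := by rw [FourierTransform.fourierInv_fourier_eq]
    rw [← SchwartzMap.fourierInv_coe, ← this]
  rw [hf, Real.fourierInv_eq']
  unfold mD
  simp_rw [Real.fourierInv_eq']
  obtain ⟨B, hB⟩ : ∃ B, ∀ ξ, ‖χ ξ‖ ≤ B := ⟨_, fun ξ => SchwartzMap.norm_le_seminorm ℝ χ ξ⟩
  refine tendsto_integral_of_dominated_convergence (fun ξ => B * ‖(𝓕 f) ξ‖) ?_ ?_ ?_ ?_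
  · intro n
    apply Continuous.aestronglyMeasurable
    have h1 := χ.continuous
    have h2 := (𝓕 f).continuous
    rw [SchwartzMap.fourier_coe] at h2
    unfold dil
    fun_prop
  · exact ((𝓕 f).integrable.norm).const_mul B
  · intro n
    refine ae_of_all _ fun ξ => ?_
    rw [norm_smul, norm_mul, Complex.norm_exp_ofReal_mul_I, one_mul]
    rw [SchwartzMap.fourier_coe]
    exact mul_le_mul_of_nonneg_right (hB _) (norm_nonneg _)
  · refine ae_of_all _ fun ξ => ?_
    have h1 : Tendsto (fun n => dil χ (L n) ξ) atTop (nhds 1) := by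
      rw [← h0]
      have h2 : Tendsto (fun n => (L n)⁻¹ • ξ) atTop (nhds 0) := by
        have := (tendsto_inv_atTop_zero.comp hL).smul_const ξ
        simpa using this
      exact (χ.continuous.tendsto 0).comp h2
    have h3 := (h1.mul_const (𝓕 (⇑f) ξ)).const_smul
      (Complex.exp (↑(2 * π * inner ℝ ξ x) * Complex.I))
    simpa [SchwartzMap.fourier_coe] using h3

/-! ### The basic bump function and the Sobolev inequality for Schwartz functions -/

/-- a smooth bump, equal to `1` on `|ξ| ≤ 2` and vanishing for `|ξ| ≥ 4`. -/
def bmp : ContDiffBump (0 : E3) := ⟨2, 4, by norm_num, by norm_num⟩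

lemma bmp_smooth : ContDiff ℝ ∞ (fun x : E3 => bmp x) := bmp.contDiff

lemma bmp_one {x : E3} (h : ‖x‖ ≤ 2) : bmp x = 1 :=
  bmp.one_of_mem_closedBall (by simpa [bmp] using h)

lemma bmp_zero {x : E3} (h : 4 ≤ ‖x‖) : bmp x = 0 :=
  bmp.zero_of_le_dist (by simpa [bmp] using h)

lemma fderiv_le_gradNorm (u : E3 → ℂ) (x : E3) : ‖fderiv ℝ u x‖ ≤ gradNorm u x := by
  refine ContinuousLinearMap.opNorm_le_bound _ (Real.sqrt_nonneg _) fun v => ?_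
  have hv : v = ∑ i, v i • e3 i := by
    ext j
    fin_cases j <;> simp [Fin.sum_univ_three, e3]
  have h1 : fderiv ℝ u x v = ∑ i, (v i : ℂ) * pd u i x := by
    conv_lhs => rw [hv]
    simp [pd, map_sum]
  rw [h1]
  calc ‖∑ i, (v i : ℂ) * pd u i x‖ ≤ ∑ i, |v i| * ‖pd u i x‖ := by
        refine (norm_sum_le _ _).trans (le_of_eq ?_)
        simp
    _ ≤ √(∑ i, |v i| ^ 2) * √(∑ i, ‖pd u i x‖ ^ 2) :=
        Real.sum_mul_le_sqrt_mul_sqrt _ _ _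
    _ = gradNorm u x * ‖v‖ := by
        rw [mul_comm]
        unfold gradNorm
        simp [EuclideanSpace.norm_eq, Complex.normSq_eq_norm_sq]

lemma pd_le_gradNorm (u : E3 → ℂ) (i : Fin 3) (x : E3) : ‖pd u i x‖ ≤ gradNorm u x := by
  unfold gradNorm
  apply Real.le_sqrt_of_sq_le
  rw [← Complex.normSq_eq_norm_sq]
  exact Finset.single_le_sum (f := fun i => Complex.normSq (pd u i x))
    (fun i _ => Complex.normSq_nonneg _) (Finset.mem_univ i)

lemma gradNorm_nonneg (u : E3 → ℂ) (x : E3) : 0 ≤ gradNorm u x := Real.sqrt_nonneg _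

lemma gradNorm_continuous (u : SchwartzMap E3 ℂ) : Continuous (gradNorm u) := by
  have h1 : Continuous fun x => fderiv ℝ u x := (u.smooth ⊤).continuous_fderiv (by simp)
  refine Real.continuous_sqrt.comp (continuous_finsetSum _ fun i _ => ?_)
  exact Complex.continuous_normSq.comp (h1.clm_apply continuous_const)

lemma gradNorm_measurable (u : SchwartzMap E3 ℂ) :
    Measurable fun x => ENNReal.ofReal (gradNorm u x) :=
  (gradNorm_continuous u).measurable.ennreal_ofReal

lemma gns_schwartz : ∃ C > (0:ℝ), ∀ u : SchwartzMap E3 ℂ,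
    lnr 10 (fun x => ‖u x‖ₑ) ≤
      ENNReal.ofReal C * lnr (30/13) (fun x => ENNReal.ofReal (gradNorm u x)) := by
  set K := SNormLESNormFDerivOfEqConst ℂ (volume : Measure E3) ((30/13 : NNReal) : ℝ) with hK
  obtain ⟨B, hB⟩ : ∃ B, ∀ x, ‖fderiv ℝ (fun x : E3 => bmp x) x‖ ≤ B := by
    have hc : HasCompactSupport (fderiv ℝ (fun x : E3 => bmp x)) := bmp.hasCompactSupport.fderiv ℝ
    have hcc : Continuous (fderiv ℝ (fun x : E3 => bmp x)) :=
      bmp_smooth.continuous_fderiv (by simp)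
    exact hcc.bounded_above_of_compact_support hc
  refine ⟨K + 1, by positivity, fun u => ?_⟩
  have hB0 : 0 ≤ B := (norm_nonneg _).trans (hB 0)
  let w : ℕ → E3 → ℂ := fun n x => bmp (((n:ℝ)+1)⁻¹ • x) • u x
  have hp1 : (ENNReal.ofReal (30/13)) = ((30/13 : NNReal) : ℝ≥0∞) := by
    rw [ENNReal.ofReal]
    congr 1
    rw [Real.toNNReal_div (by norm_num)]; simp
  have hp2 : (ENNReal.ofReal 10) = ((10 : NNReal) : ℝ≥0∞) := by
    simp
  have husm : ContDiff ℝ ∞ u := u.smooth'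
  have hdil : ∀ n : ℕ, ContDiff ℝ ∞ fun x : E3 => bmp (((n:ℝ)+1)⁻¹ • x) := fun n =>
    bmp_smooth.comp (contDiff_const_smul _)
  have hwsm : ∀ n, ContDiff ℝ ∞ (w n) := fun n => (hdil n).smul husm
  have hwc : ∀ n, HasCompactSupport (w n) := by
    intro n
    refine HasCompactSupport.intro (isCompact_closedBall (0:E3) (4 * ((n:ℝ)+1))) fun x hx => ?_
    have hx' : 4 * ((n:ℝ)+1) < ‖x‖ := by simpa using hx
    have hn : (0:ℝ) < (n:ℝ)+1 := by positivity
    have : bmp (((n:ℝ)+1)⁻¹ • x) = 0 := by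
      apply bmp_zero
      rw [norm_smul, norm_inv, Real.norm_of_nonneg hn.le, ← div_eq_inv_mul, le_div_iff₀ hn]
      exact hx'.le
    simp only [w, this, zero_smul]
  have hlim : ∀ x, Tendsto (fun n => w n x) atTop (nhds (u x)) := by
    intro x
    apply tendsto_const_nhds.congr'
    have h2 : Tendsto (fun n : ℕ => ((n:ℝ)+1)⁻¹ • x) atTop (nhds 0) := by
      have := (tendsto_one_div_add_atTop_nhds_zero_nat (𝕜 := ℝ)).smul_const x
      simpa using this
    have h3 : ∀ᶠ n : ℕ in atTop, ‖((n:ℝ)+1)⁻¹ • x‖ < 2 := by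
      have := h2.norm
      rw [norm_zero] at this
      exact this.eventually (gt_mem_nhds (by norm_num))
    filter_upwards [h3] with n hn
    simp only [w, bmp_one hn.le, one_smul]
  have hfd : ∀ n x, ‖fderiv ℝ (w n) x‖ₑ ≤
      ENNReal.ofReal (gradNorm u x) + ENNReal.ofReal (B * ((n:ℝ)+1)⁻¹) * ‖u x‖ₑ := by
    intro n x
    have hd1 : DifferentiableAt ℝ (fun x : E3 => bmp (((n:ℝ)+1)⁻¹ • x)) x :=
      (hdil n).differentiable (by simp) x
    have hd2 : DifferentiableAt ℝ u x := u.differentiable x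
    have e1 : fderiv ℝ (w n) x = _ := fderiv_fun_smul hd1 hd2
    have e2 : fderiv ℝ (fun x : E3 => bmp (((n:ℝ)+1)⁻¹ • x)) x =
        ((n:ℝ)+1)⁻¹ • fderiv ℝ (fun x : E3 => bmp x) (((n:ℝ)+1)⁻¹ • x) :=
      fderiv_comp_smul (f := fun x : E3 => bmp x) _
    have h3 : ‖fderiv ℝ (w n) x‖ ≤ gradNorm u x + B * ((n:ℝ)+1)⁻¹ * ‖u x‖ := by
      rw [e1]
      refine (norm_add_le _ _).trans (add_le_add ?_ ?_)
      · rw [norm_smul]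
        have : ‖bmp (((n:ℝ)+1)⁻¹ • x)‖ ≤ 1 := by
          rw [Real.norm_of_nonneg bmp.nonneg]; exact bmp.le_one
        have h4 := fderiv_le_gradNorm u x
        nlinarith [norm_nonneg (fderiv ℝ u x)]
      · rw [ContinuousLinearMap.norm_smulRight_apply, e2, norm_smul, Real.norm_of_nonneg (by positivity)]
        rw [mul_comm B]
        gcongr
        exact hB _
    rw [← ofReal_norm, ← ofReal_norm, ← ENNReal.ofReal_mul (by positivity),
      ← ENNReal.ofReal_add (gradNorm_nonneg u x) (by positivity)]
    exact ENNReal.ofReal_le_ofReal h3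
  have hgm := gradNorm_measurable u
  have hum : Measurable fun x => ‖u x‖ₑ := u.continuous.measurable.enorm
  have hbound : ∀ n, eLpNorm (w n) (ENNReal.ofReal 10) volume ≤
      (K:ℝ≥0∞) * (lnr (30/13) (fun x => ENNReal.ofReal (gradNorm u x)) +
        ENNReal.ofReal (B * ((n:ℝ)+1)⁻¹) * lnr (30/13) (fun x => ‖u x‖ₑ)) := by
    intro n
    have h := eLpNorm_le_eLpNorm_fderiv_of_eq (volume : Measure E3) ((hwsm n).of_le (by simp))
      (hwc n) (p := 30/13) (p' := 10) (by rw [le_div_iff₀ (by norm_num)]; norm_num) (by simp)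
      (by push_cast; simp; norm_num)
    rw [hp2]
    refine h.trans ?_
    gcongr
    rw [← hp1, eLpNorm_eq_lnr (by norm_num)]
    have hmm : Measurable fun x => ENNReal.ofReal (B * ((n:ℝ)+1)⁻¹) * ‖u x‖ₑ := hum.const_mul _
    refine (lnr_mono (by norm_num) (hfd n)).trans ((lnr_add_le (by norm_num) hgm hmm).trans ?_)
    rw [lnr_const_mul (by norm_num) _ hum]
  have hF := Lp.eLpNorm_lim_le_liminf_eLpNorm (p := ENNReal.ofReal 10) (μ := (volume : Measure E3))
    (fun n => (hwsm n).continuous.aestronglyMeasurable) u (ae_of_all _ hlim)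
  rw [← eLpNorm_eq_lnr (by norm_num)]
  refine hF.trans ?_
  have hT : Tendsto (fun n : ℕ => (K:ℝ≥0∞) * (lnr (30/13) (fun x => ENNReal.ofReal (gradNorm u x)) +
        ENNReal.ofReal (B * ((n:ℝ)+1)⁻¹) * lnr (30/13) (fun x => ‖u x‖ₑ))) atTop
      (nhds ((K:ℝ≥0∞) * (lnr (30/13) (fun x => ENNReal.ofReal (gradNorm u x)) +
        ENNReal.ofReal (B * 0) * lnr (30/13) (fun x => ‖u x‖ₑ)))) := by
    refine ENNReal.Tendsto.const_mul (Tendsto.add tendsto_const_nhds ?_) (Or.inr (by simp))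
    refine ENNReal.Tendsto.mul_const ?_ (Or.inr (lnr_schwartz_lt_top u (by norm_num)).ne)
    refine (ENNReal.continuous_ofReal.tendsto _).comp (Tendsto.const_mul _ ?_)
    have := (tendsto_one_div_add_atTop_nhds_zero_nat (𝕜 := ℝ))
    simpa using this
  have h5 := (liminf_le_liminf (Eventually.of_forall hbound)).trans_eq hT.liminf_eq
  refine h5.trans ?_
  simp only [mul_zero, ENNReal.ofReal_zero, zero_mul, add_zero]
  gcongr
  rw [← ENNReal.ofReal_coe_nnreal]
  exact ENNReal.ofReal_le_ofReal (by linarith)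

/-! ### Linear algebra of multipliers -/

lemma mD_sum {ι : Type*} (t : Finset ι) {g : ι → E3 → ℂ} (hg : ∀ i, (g i).HasTemperateGrowth)
    (f : SchwartzMap E3 ℂ) (x : E3) :
    mD (fun ξ => ∑ i ∈ t, g i ξ) f x = ∑ i ∈ t, mD (g i) f x := by
  have h1 : (fun ξ => ∑ i ∈ t, g i ξ).HasTemperateGrowth :=
    Function.HasTemperateGrowth.sum fun i _ => hg i
  rw [mD_eq h1, SchwartzMap.fourierMultiplierCLM_sum ℂ (fun i _ => hg i)]
  simp_rw [fun i => mD_eq (hg i) f]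
  simp

lemma mD_smul {g : E3 → ℂ} (hg : g.HasTemperateGrowth) (c : ℂ)
    (f : SchwartzMap E3 ℂ) (x : E3) :
    mD (fun ξ => c * g ξ) f x = c * mD g f x := by
  have h1 : (fun ξ => c * g ξ).HasTemperateGrowth :=
    (Function.HasTemperateGrowth.const c).mul hg
  have h2 := SchwartzMap.fourierMultiplierCLM_smul (F := ℂ) hg c
  rw [mD_eq h1, mD_eq hg]
  have h3 : (fun ξ => c * g ξ) = c • g := rfl
  rw [h3, h2]
  rfl

/-- the symbol of `∂_j`. -/
def pdsym (j : Fin 3) (ξ : E3) : ℂ := (2 * π * Complex.I) * ((ξ j : ℝ) : ℂ)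

lemma coord_temperate (j : Fin 3) : (fun ξ : E3 => ((ξ j : ℝ) : ℂ)).HasTemperateGrowth :=
  (Complex.ofRealCLM.comp (EuclideanSpace.proj (𝕜 := ℝ) j)).hasTemperateGrowth

lemma pdsym_temperate (j : Fin 3) : (pdsym j).HasTemperateGrowth :=
  (Function.HasTemperateGrowth.const _).mul (coord_temperate j)

lemma pd_eq_mD (u : SchwartzMap E3 ℂ) (j : Fin 3) : pd u j = mD (pdsym j) u := by
  funext x
  have h1 := SchwartzMap.lineDerivOp_apply_eq_fderiv (e3 j) u x
  unfold pd
  rw [← h1, SchwartzMap.lineDeriv_eq_fourierMultiplierCLM]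
  unfold pdsym
  rw [mD_smul (coord_temperate j), mD_eq (coord_temperate j)]
  have h2 : (fun ξ : E3 => (inner ℝ ξ (e3 j))).HasTemperateGrowth := by fun_prop
  rw [← SchwartzMap.fourierMultiplierCLM_ofReal ℂ h2]
  have h3 : (fun ξ : E3 => ((inner ℝ ξ (e3 j) : ℝ) : ℂ)) = fun ξ : E3 => ((ξ j : ℝ) : ℂ) := by
    funext ξ
    simp [e3, EuclideanSpace.inner_single_right]
  have h4 : (fun ξ : E3 => (RCLike.ofReal (inner ℝ ξ (e3 j) : ℝ) : ℂ)) =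
    fun ξ : E3 => ((ξ j : ℝ) : ℂ) := h3
  rw [h4]
  rfl

/-! ### Symbols -/

lemma exists_schwartz {g : E3 → ℂ} (R : ℝ) (h1 : ∀ ξ, R < ‖ξ‖ → g ξ = 0) (h2 : ContDiff ℝ ∞ g) :
    ∃ m : SchwartzMap E3 ℂ, ∀ ξ, m ξ = g ξ := by
  have hc : HasCompactSupport g :=
    HasCompactSupport.intro (isCompact_closedBall (0:E3) R) fun x hx => h1 x (by simpa using hx)
  exact ⟨hc.toSchwartzMap h2, fun ξ => rfl⟩

lemma contDiff_cut {b g : E3 → ℂ} {c : ℝ} (hc : 0 < c) (hb : ContDiff ℝ ∞ b)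
    (h0 : ∀ ξ, ‖ξ‖ < c → b ξ = 0) (hg : ∀ ξ, ξ ≠ 0 → ContDiffAt ℝ ∞ g ξ) :
    ContDiff ℝ ∞ fun ξ => b ξ * g ξ := by
  rw [contDiff_iff_contDiffAt]
  intro ξ
  by_cases h : ξ = 0
  · subst h
    refine (contDiffAt_const (c := (0:ℂ))).congr_of_eventuallyEq ?_
    filter_upwards [Metric.ball_mem_nhds (0:E3) hc] with x hx
    rw [h0 x (by simpa using hx), zero_mul]
  · exact hb.contDiffAt.mul (hg ξ h)

lemma rpow_norm_contDiffAt (a : ℝ) {ξ : E3} (h : ξ ≠ 0) :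
    ContDiffAt ℝ ∞ (fun ξ : E3 => ((‖ξ‖ ^ a : ℝ) : ℂ)) ξ := by
  have h1 : ContDiffAt ℝ ∞ (fun ξ : E3 => ‖ξ‖) ξ := contDiffAt_norm ℝ h
  have h2 : ContDiffAt ℝ ∞ (fun ξ : E3 => ‖ξ‖ ^ a) ξ :=
    h1.rpow_const_of_ne (norm_ne_zero_iff.2 h)
  exact Complex.ofRealCLM.contDiff.contDiffAt.comp ξ h2

lemma ofReal_contDiff {g : E3 → ℝ} (h : ContDiff ℝ ∞ g) : ContDiff ℝ ∞ fun ξ => ((g ξ : ℝ) : ℂ) :=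
  Complex.ofRealCLM.contDiff.comp h

/-- the bump `χ` as a Schwartz function. -/
def chi : SchwartzMap E3 ℂ :=
  (exists_schwartz (g := fun ξ => ((bmp ξ : ℝ) : ℂ)) 4
    (fun ξ h => by rw [bmp_zero h.le]; simp) (ofReal_contDiff bmp_smooth)).choose

lemma chi_apply (ξ : E3) : chi ξ = ((bmp ξ : ℝ) : ℂ) :=
  (exists_schwartz (g := fun ξ => ((bmp ξ : ℝ) : ℂ)) 4
    (fun ξ h => by rw [bmp_zero h.le]; simp) (ofReal_contDiff bmp_smooth)).choose_spec ξ

/-- the annular bump `β(ξ) = χ(ξ/2) − χ(ξ)`. -/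
def bet (ξ : E3) : ℂ := chi ((2:ℝ)⁻¹ • ξ) - chi ξ

lemma bet_smooth : ContDiff ℝ ∞ bet := by
  have h : ContDiff ℝ ∞ chi := chi.smooth'
  exact (h.comp (contDiff_const_smul _)).sub h

lemma bet_low {ξ : E3} (h : ‖ξ‖ < 2) : bet ξ = 0 := by
  unfold bet
  rw [chi_apply, chi_apply, bmp_one h.le, bmp_one, sub_self]
  rw [norm_smul]
  norm_num
  linarith [norm_nonneg ξ]

lemma bet_high {ξ : E3} (h : 8 < ‖ξ‖) : bet ξ = 0 := by
  unfold bet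
  rw [chi_apply, chi_apply, bmp_zero, bmp_zero]
  · simp
  · linarith
  · rw [norm_smul]
    norm_num
    linarith

lemma chi_temperate : (⇑chi).HasTemperateGrowth := chi.hasTemperateGrowth

lemma bet_temperate : bet.HasTemperateGrowth := by
  have h := (dil_temperate chi_temperate 2).sub chi_temperate
  exact h

lemma lo_symbol {s : ℝ} (hs1 : s < 1) {η : ℝ → ℝ} (hη : IsCutoff s η) :
    ∃ m : SchwartzMap E3 ℂ, ∀ ξ, m ξ * (η ‖ξ‖ : ℂ) = chi ξ := by
  have h1 : ∀ ξ : E3, (η ‖ξ‖ : ℂ) ≠ 0 := fun ξ => by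
    exact_mod_cast (hη.2.2.1 _ (norm_nonneg ξ)).1.ne'
  obtain ⟨m, hm⟩ := exists_schwartz (g := fun ξ => chi ξ * (η ‖ξ‖ : ℂ)⁻¹) 4
    (fun ξ h => by rw [chi_apply, bmp_zero h.le]; simp) (chi.smooth'.mul ((eta_temperate hs1 hη).1.inv h1))
  refine ⟨m, fun ξ => ?_⟩
  rw [hm, mul_assoc, inv_mul_cancel₀ (h1 ξ), mul_one]

lemma theta_symbol {s : ℝ} (hs1 : s < 1) {η : ℝ → ℝ} (hη : IsCutoff s η) :
    ∃ m : SchwartzMap E3 ℂ, ∀ ξ, ‖ξ‖ ≤ 8 → m ξ = (η ‖ξ‖ : ℂ) := by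
  have h : ContDiff ℝ ∞ chi := chi.smooth'
  obtain ⟨m, hm⟩ := exists_schwartz (g := fun ξ => chi ((4:ℝ)⁻¹ • ξ) * (η ‖ξ‖ : ℂ)) 16
    (fun ξ h => by
      rw [chi_apply, bmp_zero]
      · simp
      · rw [norm_smul]; norm_num; linarith)
    ((h.comp (contDiff_const_smul _)).mul (eta_temperate hs1 hη).1)
  refine ⟨m, fun ξ hξ => ?_⟩
  rw [hm, chi_apply, bmp_one]
  · simp
  · rw [norm_smul]; norm_num; linarith

lemma psi_symbol {ψ : E3 → ℝ} (hψsm : ContDiff ℝ ∞ ψ)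
    (hψsupp : Function.support ψ ⊆ {ξ : E3 | 1/2 ≤ ‖ξ‖ ∧ ‖ξ‖ ≤ 2}) (a : ℝ) :
    ∃ m : SchwartzMap E3 ℂ, ∀ ξ, m ξ = (ψ ξ : ℂ) * ((‖ξ‖ ^ a : ℝ) : ℂ) := by
  have h0 : ∀ ξ, ¬ (1/2 ≤ ‖ξ‖ ∧ ‖ξ‖ ≤ 2) → ψ ξ = 0 := fun ξ h => by
    by_contra h'
    exact h (hψsupp h')
  refine exists_schwartz 2 (fun ξ h => ?_) ?_
  · rw [h0 ξ (by rintro ⟨-, h2⟩; linarith)]; simp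
  · refine contDiff_cut (c := 1/2) (by norm_num) (ofReal_contDiff hψsm) (fun ξ h => ?_)
      fun ξ h => rpow_norm_contDiffAt a h
    rw [h0 ξ (by rintro ⟨h2, -⟩; linarith)]; simp

lemma hi_symbol (s : ℝ) (j : Fin 3) :
    ∃ m : SchwartzMap E3 ℂ, ∀ ξ, m ξ = bet ξ * (((ξ j : ℝ) : ℂ) * ((‖ξ‖ ^ (-1 - s) : ℝ) : ℂ)) := by
  refine exists_schwartz 8 (fun ξ h => ?_) ?_
  · rw [bet_high h]; simp
  · refine contDiff_cut (c := 2) (by norm_num) bet_smooth (fun ξ h => bet_low h) fun ξ h => ?_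
    exact (coord_temperate j).1.contDiffAt.mul (rpow_norm_contDiffAt _ h)

/-! ### Low and high frequency estimates -/

/-- the symbol of `I_1`. -/
def etaS (η : ℝ → ℝ) : E3 → ℂ := fun ξ => (η ‖ξ‖ : ℂ)

lemma etaS_temperate {s : ℝ} (hs1 : s < 1) {η : ℝ → ℝ} (hη : IsCutoff s η) :
    (etaS η).HasTemperateGrowth := eta_temperate hs1 hη

lemma mD_add {g h : E3 → ℂ} (hg : g.HasTemperateGrowth) (hh : h.HasTemperateGrowth)
    (f : SchwartzMap E3 ℂ) (x : E3) :
    mD (fun ξ => g ξ + h ξ) f x = mD g f x + mD h f x := by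
  have h1 := mD_sum (Finset.univ : Finset (Fin 2)) (g := ![g, h])
    (fun i => by fin_cases i <;> simp [hg, hh]) f x
  simpa [Fin.sum_univ_two] using h1

/-- the spatial norm of `∇ I_N f`. -/
def Agr (η : ℝ → ℝ) (N : ℝ) (f : E3 → ℂ) : ℝ≥0∞ :=
  lnr (30/13) (fun x => ENNReal.ofReal (gradNorm (Iop η N f) x))

lemma exists_Iop {s : ℝ} (hs1 : s < 1) {η : ℝ → ℝ} (hη : IsCutoff s η) {N : ℝ} (hN : 0 < N)
    (f : SchwartzMap E3 ℂ) : ∃ u : SchwartzMap E3 ℂ, ⇑u = Iop η N f ∧ ⇑u = mD (dil (etaS η) N) f :=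
  ⟨SchwartzMap.fourierMultiplierCLM ℂ (dil (etaS η) N) f, by
    rw [← mD_eq (dil_temperate (etaS_temperate hs1 hη) N)]; exact (Iop_eq η hN f).symm, by
    rw [← mD_eq (dil_temperate (etaS_temperate hs1 hη) N)]⟩

lemma mD_measurable {m : E3 → ℂ} (hm : m.HasTemperateGrowth) (f : SchwartzMap E3 ℂ) :
    Measurable fun x => ‖mD m f x‖ₑ := by
  rw [mD_eq hm]
  exact (SchwartzMap.continuous _).measurable.enorm

lemma lo_est {s : ℝ} (hs1 : s < 1) {η : ℝ → ℝ} (hη : IsCutoff s η) :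
    ∃ C > (0:ℝ), ∀ N > (0:ℝ), ∀ f : SchwartzMap E3 ℂ,
      lnr 10 (fun x => ‖mD (dil chi N) f x‖ₑ) ≤ ENNReal.ofReal C * Agr η N f := by
  obtain ⟨m, hm⟩ := lo_symbol hs1 hη
  obtain ⟨C1, hC1, hB⟩ := bernstein_ineq m (q := 10) (r := 10) (by norm_num) le_rfl
  obtain ⟨C2, hC2, hG⟩ := gns_schwartz
  refine ⟨C1 * C2, by positivity, fun N hN f => ?_⟩
  obtain ⟨u, hu1, hu2⟩ := exists_Iop hs1 hη hN f
  have h1 : mD (dil chi N) f = mD (dil m N) u := by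
    rw [hu2, mD_mD (dil_temperate m.hasTemperateGrowth N)
      (dil_temperate (etaS_temperate hs1 hη) N)]
    congr 1
    funext ξ
    exact (hm _).symm
  have hum : Measurable fun x => ‖u x‖ₑ := u.continuous.measurable.enorm
  rw [h1]
  calc lnr 10 (fun x => ‖mD (dil m N) u x‖ₑ) ≤ lnr 10 (cv (kerm m N) (fun y => ‖u y‖ₑ)) :=
        lnr_mono (by norm_num) fun x => mD_dil_le m u hN x
    _ ≤ _ := hB N hN _ hum
    _ ≤ ENNReal.ofReal C1 * (ENNReal.ofReal C2 * Agr η N f) := by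
        gcongr
        · simp
        · have := hG u
          rw [hu1] at this
          unfold Agr
          rw [hu1]
          exact this
    _ = _ := by rw [ENNReal.ofReal_mul hC1.le, mul_assoc]

lemma hi_symbol_id {s : ℝ} {η : ℝ → ℝ} (hη : IsCutoff s η) {b : Fin 3 → SchwartzMap E3 ℂ}
    (hb : ∀ j ξ, b j ξ = bet ξ * (((ξ j : ℝ) : ℂ) * ((‖ξ‖ ^ (-1 - s) : ℝ) : ℂ)))
    {N : ℝ} (hN : 0 < N) (k : ℕ) (ξ : E3) :
    dil bet (2 ^ k * N) ξ = ∑ j, (2 * π * Complex.I)⁻¹ *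
      (((2 ^ k * N)⁻¹ * ((2:ℝ) ^ k) ^ (1 - s) : ℝ) : ℂ) *
      (dil (b j) (2 ^ k * N) ξ * (pdsym j ξ * dil (etaS η) N ξ)) := by
  obtain ⟨L, hL⟩ : ∃ L : ℝ, L = 2 ^ k * N := ⟨_, rfl⟩
  rw [← hL]
  have hL0 : 0 < L := by rw [hL]; positivity
  set ζ : E3 := L⁻¹ • ξ with hζ
  have hξ : ξ = L • ζ := by rw [hζ, smul_smul, mul_inv_cancel₀ hL0.ne', one_smul]
  by_cases h2 : ‖ζ‖ < 2
  · simp only [dil, ← hζ, hb, bet_low h2]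
    simp
  push Not at h2
  have hz0 : 0 < ‖ζ‖ := by linarith
  have hN1 : N⁻¹ • ξ = ((2:ℝ) ^ k) • ζ := by
    rw [hξ, smul_smul, hL]; congr 1; field_simp
  have hk1 : (1:ℝ) ≤ 2 ^ k := one_le_pow₀ (by norm_num)
  have hnorm : ‖N⁻¹ • ξ‖ = 2 ^ k * ‖ζ‖ := by
    rw [hN1, norm_smul, Real.norm_of_nonneg (by positivity)]
  have heta : η ‖N⁻¹ • ξ‖ = ((2:ℝ) ^ k) ^ (s - 1) * ‖ζ‖ ^ (s - 1) := by
    rw [hnorm, hη.2.2.2.2 _ (by nlinarith), Real.mul_rpow (by positivity) (by positivity)]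
  have hsq : ∑ j, ζ j ^ 2 = ‖ζ‖ ^ 2 := by
    rw [EuclideanSpace.norm_sq_eq]; simp
  have hp1 : ((2:ℝ) ^ k) ^ (1 - s) * ((2:ℝ) ^ k) ^ (s - 1) = 1 := by
    rw [← Real.rpow_add (by positivity)]; simp
  have hp2 : ‖ζ‖ ^ 2 * ‖ζ‖ ^ (-1 - s) * ‖ζ‖ ^ (s - 1) = 1 := by
    rw [← Real.rpow_natCast, ← Real.rpow_add hz0, ← Real.rpow_add hz0]
    rw [show ((2:ℕ):ℝ) + (-1 - s) + (s - 1) = 0 by push_cast; ring, Real.rpow_zero]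
  have hterm : ∀ j : Fin 3, (2 * π * Complex.I)⁻¹ *
      ((L⁻¹ * ((2:ℝ) ^ k) ^ (1 - s) : ℝ) : ℂ) *
      (dil (b j) L ξ * (pdsym j ξ * dil (etaS η) N ξ)) = bet ζ * ((ζ j ^ 2 *
        (‖ζ‖ ^ (-1 - s) * ‖ζ‖ ^ (s - 1)) : ℝ) : ℂ) := by
    intro j
    have hξj : ξ j = L * ζ j := by rw [hξ]; simp
    have h5 : (2 * π * Complex.I : ℂ) ≠ 0 := by simp [Real.pi_ne_zero]
    have h6 : (L : ℂ) ≠ 0 := by exact_mod_cast hL0.ne'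
    have h7 : ((((2:ℝ) ^ k) ^ (1 - s) : ℝ) : ℂ) * ((((2:ℝ) ^ k) ^ (s - 1) : ℝ) : ℂ) = 1 := by
      exact_mod_cast hp1
    simp only [dil, ← hζ, hb, etaS, heta, pdsym, hξj]
    simp only [Complex.ofReal_mul, Complex.ofReal_inv]
    rw [Complex.ofReal_pow]
    calc _ = ((2 * π * Complex.I : ℂ)⁻¹ * (2 * π * Complex.I)) * ((L:ℂ)⁻¹ * L) *
        (((((2:ℝ) ^ k) ^ (1 - s) : ℝ) : ℂ) * ((((2:ℝ) ^ k) ^ (s - 1) : ℝ) : ℂ)) *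
        (bet ζ * ((ζ j : ℂ) ^ 2 * (((‖ζ‖ ^ (-1 - s) : ℝ) : ℂ) * ((‖ζ‖ ^ (s - 1) : ℝ) : ℂ)))) := by
          ring
      _ = _ := by rw [h7, inv_mul_cancel₀ h5, inv_mul_cancel₀ h6]; ring
  rw [Finset.sum_congr rfl fun j _ => hterm j, ← Finset.mul_sum, ← Complex.ofReal_sum,
    ← Finset.sum_mul, hsq, ← mul_assoc, hp2]
  simp [dil, ← hζ]

lemma hi_est {s : ℝ} (hs1 : s < 1) {η : ℝ → ℝ} (hη : IsCutoff s η) {s' r : ℝ}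
    (hr : 30/13 ≤ r) (hs' : s' = 3 * (13/30 - 1/r)) :
    ∃ C > (0:ℝ), ∀ N > (0:ℝ), ∀ f : SchwartzMap E3 ℂ, ∀ k : ℕ,
      lnr r (fun x => ‖mD (dil bet (2 ^ k * N)) f x‖ₑ) ≤
        ENNReal.ofReal (C * N ^ (s' - 1) * ((2:ℝ) ^ (s' - s)) ^ k) * Agr η N f := by
  choose b hb using hi_symbol s
  choose C hC hB using fun j => bernstein_ineq (b j) (q := 30/13) (r := r) (by norm_num) hr
  have hr0 : 0 < r := by linarith
  refine ⟨∑ j, C j, Finset.sum_pos (fun j _ => hC j) (by simp), fun N hN f k => ?_⟩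
  obtain ⟨u, hu1, hu2⟩ := exists_Iop hs1 hη hN f
  set L : ℝ := 2 ^ k * N with hL
  have hL0 : 0 < L := by positivity
  set D : ℝ := L⁻¹ * ((2:ℝ) ^ k) ^ (1 - s) with hD
  have hD0 : 0 ≤ D := by positivity
  have hpdt : ∀ j, (dil (b j) L).HasTemperateGrowth := fun j => dil_temperate (b j).hasTemperateGrowth L
  have het : (dil (etaS η) N).HasTemperateGrowth := dil_temperate (etaS_temperate hs1 hη) N
  have hid : ∀ x, mD (dil bet L) f x = ∑ j, ((2 * π * Complex.I)⁻¹ * (D : ℂ)) *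
      mD (dil (b j) L) (mD (pdsym j) u) x := by
    intro x
    have h1 : ∀ j, mD (dil (b j) L) (mD (pdsym j) u) =
        mD (fun ξ => dil (b j) L ξ * (pdsym j ξ * dil (etaS η) N ξ)) f := by
      intro j
      rw [hu2, mD_mD (pdsym_temperate j) het]
      exact mD_mD (hpdt j) ((pdsym_temperate j).mul het) f
    have ht : ∀ j, (fun ξ => dil (b j) L ξ * (pdsym j ξ * dil (etaS η) N ξ)).HasTemperateGrowth :=
      fun j => (hpdt j).mul ((pdsym_temperate j).mul het)
    simp_rw [h1]
    have ht2 : ∀ j, (fun ξ => ((2 * π * Complex.I)⁻¹ * (D : ℂ)) *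
        (dil (b j) L ξ * (pdsym j ξ * dil (etaS η) N ξ))).HasTemperateGrowth :=
      fun j => (Function.HasTemperateGrowth.const _).mul (ht j)
    rw [← Finset.sum_congr rfl fun j _ => mD_smul (ht j) _ f x, ← mD_sum _ ht2]
    refine congrFun (congrFun (congrArg mD ?_) f) x
    funext ξ
    exact hi_symbol_id hη hb hN k ξ
  have hgm : Measurable fun x => ENNReal.ofReal (gradNorm u x) := gradNorm_measurable u
  have hpt : ∀ x, ‖mD (dil bet L) f x‖ₑ ≤ ∑ j, ENNReal.ofReal D *
      cv (kerm (b j) L) (fun x => ENNReal.ofReal (gradNorm u x)) x := by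
    intro x
    rw [hid x]
    refine (enorm_sum_le _ _).trans (Finset.sum_le_sum fun j _ => ?_)
    rw [enorm_mul]
    refine mul_le_mul' ?_ ?_
    · rw [← ofReal_norm]
      apply ENNReal.ofReal_le_ofReal
      rw [norm_mul, Complex.norm_real, Real.norm_of_nonneg hD0]
      have : ‖(2 * π * Complex.I : ℂ)⁻¹‖ ≤ 1 := by
        simp only [norm_inv, norm_mul, Complex.norm_I, Complex.norm_real, Complex.norm_ofNat,
          Real.norm_of_nonneg Real.pi_pos.le, mul_one]
        apply inv_le_one_of_one_le₀
        linarith [Real.pi_gt_three]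
      nlinarith
    · obtain ⟨v, hv⟩ : ∃ v : SchwartzMap E3 ℂ, ⇑v = mD (pdsym j) u :=
        ⟨_, (mD_eq (pdsym_temperate j) u).symm⟩
      rw [← hv]
      refine (mD_dil_le (b j) v hL0 x).trans (cv_mono (fun y => ?_) x)
      rw [hv, ← pd_eq_mD, ← ofReal_norm]
      exact ENNReal.ofReal_le_ofReal (pd_le_gradNorm u j y)
  have hcm : ∀ j, Measurable (cv (kerm (b j) L) (fun x => ENNReal.ofReal (gradNorm u x))) :=
    fun j => cv_measurable (ker_measurable _ _) hgm
  have hA : Agr η N f = lnr (30/13) (fun x => ENNReal.ofReal (gradNorm u x)) := by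
    unfold Agr; rw [hu1]
  have hexp : D * L ^ s' = N ^ (s' - 1) * ((2:ℝ) ^ (s' - s)) ^ k := by
    rw [hD, ← Real.rpow_neg_one L]
    have e1 : L ^ (-1:ℝ) * L ^ s' = L ^ (s' - 1) := by
      rw [← Real.rpow_add hL0]; congr 1; ring
    have e2 : L ^ (s' - 1) = ((2:ℝ) ^ k) ^ (s' - 1) * N ^ (s' - 1) := by
      rw [hL, Real.mul_rpow (by positivity) hN.le]
    have e3 : ((2:ℝ) ^ k) ^ (s' - 1) * ((2:ℝ) ^ k) ^ (1 - s) = ((2:ℝ) ^ (s' - s)) ^ k := by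
      rw [← Real.rpow_add (by positivity), ← Real.rpow_natCast, ← Real.rpow_natCast,
        ← Real.rpow_mul (by norm_num), ← Real.rpow_mul (by norm_num)]
      congr 1; ring
    calc _ = (L ^ (-1:ℝ) * L ^ s') * ((2:ℝ) ^ k) ^ (1 - s) := by ring
      _ = N ^ (s' - 1) * (((2:ℝ) ^ k) ^ (s' - 1) * ((2:ℝ) ^ k) ^ (1 - s)) := by rw [e1, e2]; ring
      _ = _ := by rw [e3]
  refine (lnr_mono hr0 hpt).trans ?_
  refine (lnr_sum_le _ (by linarith) fun j => (hcm j).const_mul _).trans ?_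
  have hj : ∀ j, lnr r (fun x => ENNReal.ofReal D *
      cv (kerm (b j) L) (fun x => ENNReal.ofReal (gradNorm u x)) x) ≤
      ENNReal.ofReal (C j * (D * L ^ s')) * Agr η N f := by
    intro j
    rw [lnr_const_mul hr0 _ (hcm j), hA]
    refine (mul_le_mul_right (hB j L hL0 _ hgm) _).trans (le_of_eq ?_)
    rw [← mul_assoc, ← ENNReal.ofReal_mul hD0]
    congr 2
    rw [hs', one_div_div]
    ring
  refine (Finset.sum_le_sum fun j _ => hj j).trans (le_of_eq ?_)
  rw [← Finset.sum_mul, ← ENNReal.ofReal_sum_of_nonneg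
    (fun j _ => mul_nonneg (hC j).le (by positivity)), ← Finset.sum_mul, hexp]
  congr 2
  ring

/-- the high-frequency majorant. -/
def Hmaj (N : ℝ) (f : E3 → ℂ) : E3 → ℝ≥0∞ := fun x => ∑' k : ℕ, ‖mD (dil bet (2 ^ k * N)) f x‖ₑ

lemma Hmaj_measurable (N : ℝ) (f : SchwartzMap E3 ℂ) : Measurable (Hmaj N f) :=
  Measurable.tsum fun k => mD_measurable (dil_temperate bet_temperate _) f

lemma Hmaj_est {s : ℝ} (hs1 : s < 1) {η : ℝ → ℝ} (hη : IsCutoff s η) {s' r : ℝ}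
    (hr : 30/13 ≤ r) (hs' : s' = 3 * (13/30 - 1/r)) (hss : s' < s) :
    ∃ C > (0:ℝ), ∀ N > (0:ℝ), ∀ f : SchwartzMap E3 ℂ,
      lnr r (Hmaj N f) ≤ ENNReal.ofReal (C * N ^ (s' - 1)) * Agr η N f := by
  obtain ⟨C, hC, h⟩ := hi_est hs1 hη hr hs'
  have hρ0 : 0 ≤ (2:ℝ) ^ (s' - s) := by positivity
  have hρ1 : (2:ℝ) ^ (s' - s) < 1 := Real.rpow_lt_one_of_one_lt_of_neg (by norm_num) (by linarith)
  have h1ρ : 0 < 1 - (2:ℝ) ^ (s' - s) := by linarith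
  refine ⟨C * (1 - (2:ℝ) ^ (s' - s))⁻¹, by positivity, fun N hN f => ?_⟩
  refine (lnr_tsum_le (by linarith) fun k =>
    mD_measurable (dil_temperate bet_temperate _) f).trans ?_
  refine (ENNReal.tsum_le_tsum fun k => h N hN f k).trans (le_of_eq ?_)
  rw [ENNReal.tsum_mul_right, ← ENNReal.ofReal_tsum_of_nonneg (fun k => by positivity)
    ((summable_geometric_of_lt_one hρ0 hρ1).mul_left _), tsum_mul_left,
    tsum_geometric_of_lt_one hρ0 hρ1]
  congr 2
  ring

lemma pointwise_split {N : ℝ} (hN : 0 < N) (f : SchwartzMap E3 ℂ) (x : E3) :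
    ‖f x‖ₑ ≤ ‖mD (dil chi N) f x‖ₑ + Hmaj N f x := by
  have htel : ∀ n : ℕ, mD (dil chi (2 ^ n * N)) f x = mD (dil chi N) f x +
      ∑ k ∈ Finset.range n, mD (dil bet (2 ^ k * N)) f x := by
    intro n
    induction n with
    | zero => simp
    | succ n ih =>
      rw [Finset.sum_range_succ, ← add_assoc, ← ih,
        ← mD_add (dil_temperate chi_temperate _) (dil_temperate bet_temperate _)]
      refine congrFun (congrFun (congrArg mD ?_) f) x
      funext ξ
      simp only [dil, bet, smul_smul]
      rw [add_sub_cancel]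
      congr 2
      rw [pow_succ, mul_inv, mul_inv, mul_inv]
      ring
  have hlim : Tendsto (fun n : ℕ => (2:ℝ) ^ n * N) atTop atTop :=
    (tendsto_pow_atTop_atTop_of_one_lt (by norm_num)).atTop_mul_const hN
  have h0 : chi 0 = 1 := by rw [chi_apply, bmp_one (by simp)]; simp
  have ht := (mD_dil_tendsto chi h0 f hlim x).enorm
  refine le_of_tendsto ht (Eventually.of_forall fun n => ?_)
  rw [htel n]
  refine (enorm_add_le _ _).trans (add_le_add le_rfl ?_)
  exact (enorm_sum_le _ _).trans (ENNReal.sum_le_tsum _)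

/-! ### The operator `P_M I_N` and the fixed-time estimate -/

lemma bernstein_two (m : SchwartzMap E3 ℂ) {q e : ℝ} (hq : 1 ≤ q) (hqr : q ≤ 10/3)
    (he : e = 3 * (1 / q - 3 / 10)) :
    ∃ C > (0:ℝ), ∀ L > (0:ℝ), ∀ G₁ G₂ : E3 → ℝ≥0∞, Measurable G₁ → Measurable G₂ →
      lnr (10/3) (cv (kerm m L) (fun x => G₁ x + G₂ x)) ≤
        ENNReal.ofReal C * (lnr (10/3) G₁ + ENNReal.ofReal (L ^ e) * lnr q G₂) := by
  obtain ⟨C₁, hC₁, h₁⟩ := bernstein_ineq m (q := 10/3) (r := 10/3) (by norm_num) le_rfl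
  obtain ⟨C₂, hC₂, h₂⟩ := bernstein_ineq m hq hqr
  refine ⟨C₁ + C₂, by positivity, fun L hL G₁ G₂ hG₁ hG₂ => ?_⟩
  have hk := ker_measurable m L
  have e1 : cv (kerm m L) (fun x => G₁ x + G₂ x) =
      fun x => cv (kerm m L) G₁ x + cv (kerm m L) G₂ x := funext fun x => cv_add hk hG₁ x
  rw [e1]
  refine (lnr_add_le (by norm_num) (cv_measurable hk hG₁) (cv_measurable hk hG₂)).trans ?_
  rw [mul_add]
  refine add_le_add ((h₁ L hL G₁ hG₁).trans ?_) ((h₂ L hL G₂ hG₂).trans ?_)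
  · gcongr
    simp
    linarith
  · rw [← mul_assoc, ← ENNReal.ofReal_mul (by positivity)]
    refine mul_le_mul' (ENNReal.ofReal_le_ofReal ?_) le_rfl
    have e2 : 3 * (1 / q - 1 / (10 / 3)) = e := by rw [he]; norm_num
    rw [e2]
    have : 0 < L ^ e := by positivity
    nlinarith [mul_pos hC₁ this]

lemma PI_symbol_low {η : ℝ → ℝ} {ψ : E3 → ℝ}
    (hψsupp : Function.support ψ ⊆ {ξ : E3 | 1/2 ≤ ‖ξ‖ ∧ ‖ξ‖ ≤ 2})
    {θ ψS : SchwartzMap E3 ℂ} (hθ : ∀ ξ, ‖ξ‖ ≤ 8 → θ ξ = (η ‖ξ‖ : ℂ))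
    (hψS : ∀ ξ, ψS ξ = (ψ ξ : ℂ)) {M N : ℝ} (hM : 0 < M) (hN : 0 < N) (hMN : M ≤ 4 * N) (ξ : E3) :
    dil ψS M ξ * dil (etaS η) N ξ = dil ψS M ξ * dil θ N ξ := by
  simp only [dil, hψS]
  by_cases h : ψ (M⁻¹ • ξ) = 0
  · simp [h]
  · have h2 : ‖M⁻¹ • ξ‖ ≤ 2 := (hψsupp h).2
    rw [norm_smul, norm_inv, Real.norm_of_nonneg hM.le, ← div_eq_inv_mul, div_le_iff₀ hM] at h2
    rw [hθ]
    · rfl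
    · rw [norm_smul, norm_inv, Real.norm_of_nonneg hN.le, ← div_eq_inv_mul, div_le_iff₀ hN]
      linarith

lemma PI_symbol_high {s : ℝ} {η : ℝ → ℝ} (hη : IsCutoff s η) {ψ : E3 → ℝ}
    (hψsupp : Function.support ψ ⊆ {ξ : E3 | 1/2 ≤ ‖ξ‖ ∧ ‖ξ‖ ≤ 2})
    {ψT ψS : SchwartzMap E3 ℂ} (hψT : ∀ ξ, ψT ξ = (ψ ξ : ℂ) * ((‖ξ‖ ^ (s - 1) : ℝ) : ℂ))
    (hψS : ∀ ξ, ψS ξ = (ψ ξ : ℂ)) {M N : ℝ} (hM : 0 < M) (hN : 0 < N) (hMN : 4 * N ≤ M) (ξ : E3) :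
    dil ψS M ξ * dil (etaS η) N ξ = (((M / N) ^ (s - 1) : ℝ) : ℂ) * dil ψT M ξ := by
  simp only [dil, hψS, hψT, etaS]
  by_cases h : ψ (M⁻¹ • ξ) = 0
  · simp [h]
  · have h2 : 1/2 ≤ ‖M⁻¹ • ξ‖ := (hψsupp h).1
    have e1 : ‖N⁻¹ • ξ‖ = (M / N) * ‖M⁻¹ • ξ‖ := by
      rw [norm_smul, norm_smul, norm_inv, norm_inv, Real.norm_of_nonneg hM.le,
        Real.norm_of_nonneg hN.le]
      field_simp
    have h4 : 4 ≤ M / N := by rw [le_div_iff₀ hN]; exact hMN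
    rw [e1, hη.2.2.2.2 _ (by nlinarith), Real.mul_rpow (by positivity) (by positivity)]
    push_cast
    ring

lemma PI_est {s : ℝ} (hs1 : s < 1) {η : ℝ → ℝ} (hη : IsCutoff s η)
    {ψ : E3 → ℝ} (hψsm : ContDiff ℝ ∞ ψ)
    (hψsupp : Function.support ψ ⊆ {ξ : E3 | 1/2 ≤ ‖ξ‖ ∧ ‖ξ‖ ≤ 2})
    {q : ℝ} (hq : 1 ≤ q) (hqr : q ≤ 10/3) (he : 2 - s = 3 * (1 / q - 3 / 10)) :
    ∃ C > (0:ℝ), ∀ N ≥ (1:ℝ), ∀ M ≥ (1:ℝ), ∀ g : SchwartzMap E3 ℂ, ∀ G₁ G₂ : E3 → ℝ≥0∞,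
      Measurable G₁ → Measurable G₂ → (∀ x, ‖g x‖ₑ ≤ G₁ x + G₂ x) →
      lnr (10/3) (fun x => ‖PM ψ M (Iop η N g) x‖ₑ) ≤
        ENNReal.ofReal (C * M) * (lnr (10/3) G₁ + ENNReal.ofReal (N ^ (2 - s)) * lnr q G₂) := by
  obtain ⟨θ, hθ⟩ := theta_symbol hs1 hη
  obtain ⟨ψS, hψS'⟩ := psi_symbol hψsm hψsupp 0
  obtain ⟨ψT, hψT⟩ := psi_symbol hψsm hψsupp (s - 1)
  have hψS : ∀ ξ, ψS ξ = (ψ ξ : ℂ) := fun ξ => by rw [hψS']; simp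
  obtain ⟨C₁, hC₁, h₁⟩ := bernstein_two ψS hq hqr he
  obtain ⟨C₂, hC₂, h₂⟩ := bernstein_two ψT hq hqr he
  obtain ⟨D₁, hD₁, k₁⟩ := bernstein_ineq θ (q := 10/3) (r := 10/3) (by norm_num) le_rfl
  obtain ⟨D₂, hD₂, k₂⟩ := bernstein_ineq θ hq (le_refl q)
  have hq0 : 0 < q := by linarith
  refine ⟨C₁ * (D₁ + D₂ * 4 ^ (2 - s)) + C₂, by positivity, fun N hN M hM g G₁ G₂ hG₁ hG₂ hg => ?_⟩
  have hN0 : 0 < N := by linarith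
  have hM0 : 0 < M := by linarith
  have hetaT := dil_temperate (etaS_temperate hs1 hη) N
  have hψST := dil_temperate ψS.hasTemperateGrowth M
  have hPI : PM ψ M (Iop η N g) = mD (fun ξ => dil ψS M ξ * dil (etaS η) N ξ) g := by
    rw [← mD_mD hψST hetaT, PM_eq, Iop_eq η hN0]
    have : (fun ξ : E3 => (ψ ξ : ℂ)) = ψS := funext fun ξ => (hψS ξ).symm
    rw [this]
    rfl
  rw [hPI]
  have h4 : (0:ℝ) < 4 ^ (2 - s) := by positivity
  rcases le_total M (4 * N) with hMN | hMN
  · have e1 : mD (fun ξ => dil ψS M ξ * dil (etaS η) N ξ) g = mD (dil ψS M) (mD (dil θ N) g) := by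
      rw [mD_mD hψST (dil_temperate θ.hasTemperateGrowth N)]
      refine congrFun (congrArg mD ?_) g
      funext ξ
      exact PI_symbol_low hψsupp hθ hψS hM0 hN0 hMN ξ
    obtain ⟨v, hv⟩ : ∃ v : SchwartzMap E3 ℂ, ⇑v = mD (dil θ N) g :=
      ⟨_, (mD_eq (dil_temperate θ.hasTemperateGrowth N) g).symm⟩
    have hk := ker_measurable θ N
    have hvb : ∀ y, ‖v y‖ₑ ≤ cv (kerm θ N) G₁ y + cv (kerm θ N) G₂ y := by
      intro y
      rw [hv, ← cv_add hk hG₁]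
      exact (mD_dil_le θ g hN0 y).trans (cv_mono hg y)
    rw [e1, ← hv]
    refine (lnr_mono (by norm_num) fun x => (mD_dil_le ψS v hM0 x).trans (cv_mono hvb x)).trans ?_
    refine (h₁ M hM0 _ _ (cv_measurable hk hG₁) (cv_measurable hk hG₂)).trans ?_
    have a1 := k₁ N hN0 G₁ hG₁
    have a2 := k₂ N hN0 G₂ hG₂
    simp only [sub_self, mul_zero, Real.rpow_zero, mul_one] at a1 a2
    have hMe : M ^ (2 - s) ≤ 4 ^ (2 - s) * N ^ (2 - s) := by
      rw [← Real.mul_rpow (by norm_num) hN0.le]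
      exact Real.rpow_le_rpow hM0.le hMN (by linarith)
    calc ENNReal.ofReal C₁ * (lnr (10/3) (cv (kerm θ N) G₁) +
          ENNReal.ofReal (M ^ (2 - s)) * lnr q (cv (kerm θ N) G₂))
        ≤ ENNReal.ofReal C₁ * (ENNReal.ofReal (D₁ + D₂ * 4 ^ (2 - s)) * lnr (10/3) G₁ +
          ENNReal.ofReal (D₁ + D₂ * 4 ^ (2 - s)) * (ENNReal.ofReal (N ^ (2 - s)) * lnr q G₂)) := by
          refine mul_le_mul_right (add_le_add (a1.trans ?_) ?_) _
          · gcongr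
            nlinarith
          · refine (mul_le_mul' (ENNReal.ofReal_le_ofReal hMe) a2).trans ?_
            rw [← mul_assoc, ← mul_assoc, ← ENNReal.ofReal_mul (by positivity),
              ← ENNReal.ofReal_mul (by positivity)]
            refine mul_le_mul' (ENNReal.ofReal_le_ofReal ?_) le_rfl
            have : 0 < N ^ (2 - s) := by positivity
            nlinarith [mul_pos hD₁ this]
      _ = ENNReal.ofReal (C₁ * (D₁ + D₂ * 4 ^ (2 - s))) * (lnr (10/3) G₁ +
          ENNReal.ofReal (N ^ (2 - s)) * lnr q G₂) := by
          rw [← mul_add, ← mul_assoc, ← ENNReal.ofReal_mul hC₁.le]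
      _ ≤ _ := by
          refine mul_le_mul' (ENNReal.ofReal_le_ofReal ?_) le_rfl
          have : 0 < C₁ * (D₁ + D₂ * 4 ^ (2 - s)) := by positivity
          linarith [mul_le_mul_of_nonneg_left hM this.le, mul_pos hC₂ hM0,
            add_mul (C₁ * (D₁ + D₂ * 4 ^ (2 - s))) C₂ M]
  · have e1 : ∀ x, mD (fun ξ => dil ψS M ξ * dil (etaS η) N ξ) g x =
        (((M / N) ^ (s - 1) : ℝ) : ℂ) * mD (dil ψT M) g x := by
      intro x
      rw [← mD_smul (dil_temperate ψT.hasTemperateGrowth M)]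
      refine congrFun (congrFun (congrArg mD ?_) g) x
      funext ξ
      exact PI_symbol_high hη hψsupp hψT hψS hM0 hN0 hMN ξ
    set a : ℝ := (M / N) ^ (s - 1) with ha
    have ha0 : 0 < a := by positivity
    have hMN1 : 1 ≤ M / N := by rw [le_div_iff₀ hN0]; linarith
    have ha1 : a ≤ 1 := Real.rpow_le_one_of_one_le_of_nonpos hMN1 (by linarith)
    have haM : a * M ^ (2 - s) ≤ M * N ^ (2 - s) := by
      have e2 : a * M ^ (2 - s) = M * N ^ (1 - s) := by
        rw [ha, Real.div_rpow hM0.le hN0.le, div_eq_mul_inv, ← Real.rpow_neg hN0.le]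
        rw [mul_right_comm, ← Real.rpow_add hM0]
        rw [show s - 1 + (2 - s) = 1 by ring, Real.rpow_one]
        congr 2; ring
      rw [e2]
      exact mul_le_mul_of_nonneg_left (Real.rpow_le_rpow_of_exponent_le hN (by linarith)) hM0.le
    have hgm : Measurable (cv (kerm ψT M) (fun x => G₁ x + G₂ x)) :=
      cv_measurable (ker_measurable _ _) (hG₁.add hG₂)
    have hpt : ∀ x, ‖mD (fun ξ => dil ψS M ξ * dil (etaS η) N ξ) g x‖ₑ ≤
        ENNReal.ofReal a * cv (kerm ψT M) (fun x => G₁ x + G₂ x) x := by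
      intro x
      rw [e1, enorm_mul]
      refine mul_le_mul' (le_of_eq ?_) ((mD_dil_le ψT g hM0 x).trans (cv_mono hg x))
      rw [← ofReal_norm, Complex.norm_real, Real.norm_of_nonneg ha0.le]
    refine (lnr_mono (by norm_num) hpt).trans ?_
    rw [lnr_const_mul (by norm_num) _ hgm]
    refine (mul_le_mul_right (h₂ M hM0 G₁ G₂ hG₁ hG₂) _).trans ?_
    calc ENNReal.ofReal a * (ENNReal.ofReal C₂ * (lnr (10/3) G₁ +
          ENNReal.ofReal (M ^ (2 - s)) * lnr q G₂))
        = ENNReal.ofReal C₂ * (ENNReal.ofReal a * lnr (10/3) G₁ +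
          ENNReal.ofReal (a * M ^ (2 - s)) * lnr q G₂) := by
          rw [ENNReal.ofReal_mul ha0.le]; ring
      _ ≤ ENNReal.ofReal C₂ * (ENNReal.ofReal M * lnr (10/3) G₁ +
          ENNReal.ofReal (M * N ^ (2 - s)) * lnr q G₂) := by
          gcongr
          linarith
      _ = ENNReal.ofReal (C₂ * M) * (lnr (10/3) G₁ + ENNReal.ofReal (N ^ (2 - s)) * lnr q G₂) := by
          rw [ENNReal.ofReal_mul hM0.le, ENNReal.ofReal_mul hC₂.le]; ring
      _ ≤ _ := by
          gcongr
          have : 0 < C₁ * (D₁ + D₂ * 4 ^ (2 - s)) := by positivity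
          linarith

lemma cube_add_le (a b : ℝ≥0∞) : (a + b) ^ 3 ≤ 8 * a ^ 3 + 8 * b ^ 3 := by
  rcases le_total a b with h | h
  · calc (a + b) ^ 3 ≤ (b + b) ^ 3 := by gcongr
      _ = 8 * b ^ 3 := by rw [← two_mul, mul_pow]; norm_num
      _ ≤ _ := le_add_self
  · calc (a + b) ^ 3 ≤ (a + a) ^ 3 := by gcongr
      _ = 8 * a ^ 3 := by rw [← two_mul, mul_pow]; norm_num
      _ ≤ _ := le_self_add

lemma exists_cube (f : SchwartzMap E3 ℂ) : ∃ g : SchwartzMap E3 ℂ, ⇑g = fun x => f x ^ 3 := by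
  refine ⟨SchwartzMap.smulLeftCLM ℂ f (SchwartzMap.smulLeftCLM ℂ f f), ?_⟩
  funext x
  rw [SchwartzMap.smulLeftCLM_apply_apply f.hasTemperateGrowth,
    SchwartzMap.smulLeftCLM_apply_apply f.hasTemperateGrowth]
  simp only [smul_eq_mul]
  ring

lemma fixed_time {s : ℝ} (hs : 1/2 < s) (hs1 : s < 1) {η : ℝ → ℝ} (hη : IsCutoff s η)
    {ψ : E3 → ℝ} (hψsm : ContDiff ℝ ∞ ψ)
    (hψsupp : Function.support ψ ⊆ {ξ : E3 | 1/2 ≤ ‖ξ‖ ∧ ‖ξ‖ ≤ 2}) :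
    ∃ C > (0:ℝ), ∀ N ≥ (1:ℝ), ∀ M ≥ (1:ℝ), ∀ f : SchwartzMap E3 ℂ,
      lnr (10/3) (fun x => ‖PM ψ M (Iop η N (fun z => f z ^ 3)) x‖ₑ) ≤
        ENNReal.ofReal (C * M) * Agr η N f ^ 3 := by
  obtain ⟨t, ht⟩ : ∃ t : ℝ, t = 13/30 - (1 + s) / 9 := ⟨_, rfl⟩
  have ht0 : 0 < t := by linarith
  obtain ⟨q, hq⟩ : ∃ q : ℝ, q = 1 / (3 * t) := ⟨_, rfl⟩
  have hq0 : 0 < q := by rw [hq]; positivity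
  have hqinv : 1 / q = 3 * t := by rw [hq, one_div_one_div]
  have hrinv : 1 / (3 * q) = t := by rw [one_div, mul_inv, ← one_div q, hqinv]; ring
  have hq1 : 1 ≤ q := by
    rw [hq, le_div_iff₀ (by positivity)]; linarith
  have hq2 : q ≤ 10/3 := by
    rw [hq, div_le_iff₀ (by positivity)]; linarith
  have hq3 : 30/13 ≤ 3 * q := by linarith
  obtain ⟨C₀, hC₀, hP⟩ := PI_est hs1 hη hψsm hψsupp hq1 hq2 (by rw [hqinv]; linarith)
  obtain ⟨C₁, hC₁, hlo⟩ := lo_est hs1 hη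
  obtain ⟨C₂, hC₂, hhi⟩ := Hmaj_est hs1 hη (s' := (1 + s) / 3) (r := 3 * q) hq3
    (by rw [hrinv]; linarith) (by linarith)
  refine ⟨C₀ * (8 * C₁ ^ 3 + 8 * C₂ ^ 3), by positivity, fun N hN M hM f => ?_⟩
  have hN0 : 0 < N := by linarith
  have hM0 : 0 < M := by linarith
  obtain ⟨g, hg⟩ := exists_cube f
  rw [← hg]
  have hm1 : Measurable fun x => ‖mD (dil chi N) f x‖ₑ :=
    mD_measurable (dil_temperate chi_temperate N) f
  have hm2 := Hmaj_measurable N f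
  have hm1' : Measurable fun x => ‖mD (dil chi N) f x‖ₑ ^ 3 := hm1.pow_const 3
  have hm2' : Measurable fun x => Hmaj N f x ^ 3 := hm2.pow_const 3
  have hmain := hP N hN M hM g (fun x => 8 * ‖mD (dil chi N) f x‖ₑ ^ 3) (fun x => 8 * Hmaj N f x ^ 3)
    (hm1'.const_mul 8) (hm2'.const_mul 8) (fun x => by
      rw [hg]
      simp only [enorm_pow]
      exact (pow_le_pow_left₀ (zero_le) (pointwise_split hN0 f x) 3).trans (cube_add_le _ _))
  refine hmain.trans ?_
  rw [lnr_const_mul (by norm_num) _ hm1', lnr_const_mul hq0 _ hm2', lnr_pow (by norm_num),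
    lnr_pow hq0, show (3:ℝ) * (10/3) = 10 by norm_num]
  have b1 := pow_le_pow_left₀ (zero_le) (hlo N hN0 f) 3
  have b2 := pow_le_pow_left₀ (zero_le) (hhi N hN0 f) 3
  rw [mul_pow, ← ENNReal.ofReal_pow (by positivity)] at b1 b2
  have hNN : N ^ (2 - s) * (C₂ * N ^ ((1 + s) / 3 - 1)) ^ 3 = C₂ ^ 3 := by
    rw [mul_pow, ← Real.rpow_mul_natCast hN0.le, mul_left_comm, ← Real.rpow_add hN0]
    rw [show 2 - s + ((1 + s) / 3 - 1) * ((3:ℕ):ℝ) = 0 by push_cast; ring, Real.rpow_zero, mul_one]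
  have h8 : (8:ℝ≥0∞) = ENNReal.ofReal 8 := by simp
  calc ENNReal.ofReal (C₀ * M) * (8 * lnr 10 (fun x => ‖mD (dil chi N) f x‖ₑ) ^ 3 +
        ENNReal.ofReal (N ^ (2 - s)) * (8 * lnr (3 * q) (fun x => Hmaj N f x) ^ 3))
      ≤ ENNReal.ofReal (C₀ * M) * (8 * (ENNReal.ofReal (C₁ ^ 3) * Agr η N f ^ 3) +
        ENNReal.ofReal (N ^ (2 - s)) * (8 * (ENNReal.ofReal ((C₂ * N ^ ((1 + s) / 3 - 1)) ^ 3) *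
          Agr η N f ^ 3))) := by
        gcongr
    _ = ENNReal.ofReal (C₀ * M) * (8 * (ENNReal.ofReal (C₁ ^ 3) * Agr η N f ^ 3) +
        8 * ((ENNReal.ofReal (N ^ (2 - s)) * ENNReal.ofReal ((C₂ * N ^ ((1 + s) / 3 - 1)) ^ 3)) *
          Agr η N f ^ 3)) := by ring
    _ = _ := by
        rw [← ENNReal.ofReal_mul (by positivity), hNN, h8, ← mul_assoc, ← mul_assoc,
          ← ENNReal.ofReal_mul (by norm_num), ← ENNReal.ofReal_mul (by norm_num), ← add_mul,
          ← ENNReal.ofReal_add (by positivity) (by positivity), ← mul_assoc,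
          ← ENNReal.ofReal_mul (by positivity)]
        congr 2
        ring

lemma gradNorm_le_sum (g : E3 → ℂ) (x : E3) : gradNorm g x ≤ ∑ i : Fin 3, ‖pd g i x‖ := by
  unfold gradNorm
  refine Real.sqrt_le_iff.2 ⟨Finset.sum_nonneg fun _ _ => norm_nonneg _, ?_⟩
  simp only [Complex.normSq_eq_norm_sq, Fin.sum_univ_three]
  nlinarith [mul_nonneg (norm_nonneg (pd g 0 x)) (norm_nonneg (pd g 1 x)),
    mul_nonneg (norm_nonneg (pd g 0 x)) (norm_nonneg (pd g 2 x)),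
    mul_nonneg (norm_nonneg (pd g 1 x)) (norm_nonneg (pd g 2 x))]

lemma gradNorm_eLpNorm_lt_top (u : SchwartzMap E3 ℂ) (p : ℝ≥0∞) :
    eLpNorm (gradNorm u) p volume < ⊤ := by
  have hm : ∀ j : Fin 3, MemLp (pd u j) p volume := by
    intro j
    obtain ⟨v, hv⟩ : ∃ v : SchwartzMap E3 ℂ, ⇑v = pd u j :=
      ⟨_, ((pd_eq_mD u j).trans (mD_eq (pdsym_temperate j) u)).symm⟩
    rw [← hv]
    exact v.memLp p
  have h2 : MemLp (fun x => ∑ i : Fin 3, ‖pd u i x‖) p volume :=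
    memLp_finset_sum _ fun i _ => (hm i).norm
  refine lt_of_le_of_lt (eLpNorm_mono_real (g := fun x => ∑ i : Fin 3, ‖pd u i x‖) fun x => ?_) h2.2
  rw [Real.norm_of_nonneg (gradNorm_nonneg _ _)]
  exact gradNorm_le_sum _ _

lemma sadm_ten : SAdmissible 10 (30/13) := by
  have e : (30/13 : ℝ≥0∞) = ENNReal.ofReal (30/13) := by
    rw [ENNReal.ofReal_div_of_pos (by norm_num)]; simp
  refine ⟨by norm_num, ?_, ?_⟩
  · rw [e, show (2:ℝ≥0∞) = ENNReal.ofReal 2 by simp]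
    exact ENNReal.ofReal_le_ofReal (by norm_num)
  · have a : (1:ℝ≥0∞) / 10 = ENNReal.ofReal (1/10) := by
      rw [ENNReal.ofReal_div_of_pos (by norm_num)]; simp
    have b : (3:ℝ≥0∞) / (2 * (30/13)) = ENNReal.ofReal (3 / (2 * (30/13))) := by
      rw [ENNReal.ofReal_div_of_pos (by norm_num), ENNReal.ofReal_mul (by norm_num), ← e]; simp
    have c : (3:ℝ≥0∞) / 4 = ENNReal.ofReal (3/4) := by
      rw [ENNReal.ofReal_div_of_pos (by norm_num)]; simp
    rw [a, b, c, ← ENNReal.ofReal_add (by norm_num) (by norm_num)]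
    norm_num

lemma LqLr_le_Znorm (η : ℝ → ℝ) (N T : ℝ) (φ : ℝ → E3 → ℂ) :
    LqLr 10 (30/13) T (fun t x => gradNorm (Iop η N (φ t)) x) ≤ Znorm η N T φ := by
  unfold Znorm
  exact le_iSup_of_le 10 (le_iSup_of_le (30/13) (le_iSup_of_le sadm_ten le_rfl))

lemma outer_est (μ : Measure ℝ) (F A : ℝ → ℝ) (c : ℝ) (hc : 0 ≤ c)
    (hF : ∀ t, 0 ≤ F t) (hA : ∀ t, 0 ≤ A t) (h : ∀ t, F t ≤ c * A t ^ 3) :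
    eLpNorm F (10/3) μ ≤ ENNReal.ofReal c * eLpNorm A 10 μ ^ 3 := by
  have e : (10/3 : ℝ≥0∞) = ENNReal.ofReal (10/3) := by
    rw [ENNReal.ofReal_div_of_pos (by norm_num)]; simp
  have h1 : eLpNorm F (10/3) μ ≤ ENNReal.ofReal c * eLpNorm (fun t => ‖A t‖ ^ (3:ℝ)) (10/3) μ := by
    refine eLpNorm_le_mul_eLpNorm_of_ae_le_mul (Eventually.of_forall fun t => ?_) _
    rw [Real.norm_of_nonneg (hF t), Real.norm_of_nonneg (hA t), Real.norm_of_nonneg]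
    · exact_mod_cast h t
    · exact Real.rpow_nonneg (hA t) _
  refine h1.trans (le_of_eq ?_)
  rw [eLpNorm_norm_rpow A (by norm_num : (0:ℝ) < 3), e, ← ENNReal.ofReal_mul (by norm_num)]
  norm_num

/-- Fix `s ∈ (1/2, 1)`, a cutoff `η` for `I_N`, and a smooth `ψ` with
values in `[0,1]` supported in the annulus `{1/2 ≤ |ξ| ≤ 2}` defining the projections
`P_M`.  Then there is `C > 0` such that for every `T > 0`, `N ≥ 1`, `M ≥ 1` and every
smooth decaying solution `φ` of the cubic defocusing NLS on `[0,T] × ℝ³`,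
`‖P_M(I_N(φ³))‖_{L^{10/3}_{x,t}} ≤ C M Z³`, where
`Z = sup_{(q,r) admissible} ‖∇ I_N φ‖_{L^q_t L^r_x([0,T] × ℝ³)}`. -/
theorem littlewood_paley_cubic_bound
    (s : ℝ) (hs : 1/2 < s) (hs1 : s < 1) (η : ℝ → ℝ) (hη : IsCutoff s η)
    (ψ : E3 → ℝ) (hψsm : ContDiff ℝ ∞ ψ) (hψ01 : ∀ ξ : E3, ψ ξ ∈ Set.Icc (0:ℝ) 1)
    (hψsupp : Function.support ψ ⊆ {ξ : E3 | 1/2 ≤ ‖ξ‖ ∧ ‖ξ‖ ≤ 2}) :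
    ∃ C > (0:ℝ), ∀ T > (0:ℝ), ∀ N ≥ (1:ℝ), ∀ M ≥ (1:ℝ),
      ∀ φ : ℝ → E3 → ℂ, IsSolution 1 1 (fun z => z) T φ →
      LqLr (10/3) (10/3) T
          (fun t x => ‖PM ψ M (Iop η N (fun z => (φ t z) ^ 3)) x‖)
        ≤ ENNReal.ofReal (C * M) * (Znorm η N T φ) ^ 3 := by
  obtain ⟨C, hC, hfix⟩ := fixed_time hs hs1 hη hψsm hψsupp
  refine ⟨C, hC, fun T hT N hN M hM φ hφ => ?_⟩
  have hN0 : 0 < N := by linarith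
  have hM0 : 0 < M := by linarith
  have e1 : (10/3 : ℝ≥0∞) = ENNReal.ofReal (10/3) := by
    rw [ENNReal.ofReal_div_of_pos (by norm_num)]; simp
  have e2 : (30/13 : ℝ≥0∞) = ENNReal.ofReal (30/13) := by
    rw [ENNReal.ofReal_div_of_pos (by norm_num)]; simp
  refine le_trans ?_ (mul_le_mul' le_rfl (pow_le_pow_left₀ (zero_le) (LqLr_le_Znorm η N T φ) 3))
  unfold LqLr
  refine outer_est _ _ _ (C * M) (by positivity) (fun _ => ENNReal.toReal_nonneg)
    (fun _ => ENNReal.toReal_nonneg) fun t => ?_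
  obtain ⟨f, hf⟩ := hφ.schwartz 0 t
  have hft : φ t = f := funext fun x => by simpa using hf x
  obtain ⟨u, hu, -⟩ := exists_Iop hs1 hη hN0 f
  have hA : eLpNorm (fun x => gradNorm (Iop η N (φ t)) x) (30/13) volume = Agr η N f := by
    rw [e2, eLpNorm_eq_lnr (by norm_num), hft]
    unfold Agr
    congr 1
    funext x
    exact Real.enorm_of_nonneg (gradNorm_nonneg _ _)
  have hAt : eLpNorm (fun x => gradNorm (Iop η N (φ t)) x) (30/13) volume ≠ ⊤ := by
    rw [hft, ← hu]
    exact (gradNorm_eLpNorm_lt_top u _).ne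
  have hmain : eLpNorm (fun x => ‖PM ψ M (Iop η N (fun z => (φ t z) ^ 3)) x‖) (10/3) volume ≤
      ENNReal.ofReal (C * M) *
        eLpNorm (fun x => gradNorm (Iop η N (φ t)) x) (30/13) volume ^ 3 := by
    rw [hA, eLpNorm_norm, e1, eLpNorm_eq_lnr (by norm_num), hft]
    exact hfix N hN M hM f
  have := ENNReal.toReal_mono (ENNReal.mul_ne_top ENNReal.ofReal_ne_top (ENNReal.pow_ne_top hAt)) hmain
  rwa [ENNReal.toReal_mul, ENNReal.toReal_pow, ENNReal.toReal_ofReal (by positivity)] at this
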